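/- For every integer n ≥ 2095, (log p(n+1))/(n+1) + (log p(n-1))/(n-1) - 2·(log p(n))/n < 3π/(√24 · n^{5/2} + 3π). -/

import Mathlib

open Real

/-- The partition function, as a real number. -/
noncomputable def p (n : ℕ) : ℝ := (Fintype.card (Nat.Partition n) : ℝ)

/-!
Integrate `∑ p m * q ^ m` against `q ^ (-n - 1)` over the circle through the saddle point. By the
modular relation of `η` the generating function at `q = e ^ (-2πs)` is
`√s * e ^ (π / 12 * (1 / s - s))` up to an exponentially small relative error when `s` is near `0`,
so there the integral becomes that of `√σ * e ^ (κ (σ + 1 / σ))` along a vertical line, and, the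
Bessel function in question having order `3 / 2`, this integrand has an explicit primitive. On the
rest of the circle, comparing the Euler factors at `q` with those at `|q|` gives an exponential
saving. Thus `log p n` is the logarithm of the leading term of Rademacher's series up to an error of
at most `1 / n ^ 2`.

In the second difference of that logarithm divided by `n`, the part coming from `1 / √n` produces
the main term `3π / (√24 * n ^ (5 / 2))`, while `-log (24 * n - 1) / n` contributes a negative
multiple of `log n / n ^ 3`, which absorbs every error.
-/

namespace PartitionAsymptotics

section GeneratingFunction

open Filter Topology PowerSeries PowerSeries.WithPiTopology

lemma p_pos (n : ℕ) : 0 < p n := Nat.cast_pos.mpr Fintype.card_pos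

lemma p_zero : p 0 = 1 := by simp [p]

lemma p_le_two_pow (n : ℕ) : p n ≤ 2 ^ n := by
  have hcomp := Fintype.card_le_of_surjective _ (Nat.Partition.ofComposition_surj (n := n))
  rw [composition_card] at hcomp
  unfold p
  exact_mod_cast hcomp.trans (Nat.pow_le_pow_right two_pos (Nat.sub_le _ _))

/-- The series `∑ X ^ (k * j)`, which generates the partitions into parts equal to `k`. -/
noncomputable def geomSeries (k : ℕ) : ℝ⟦X⟧ := PowerSeries.mk fun n ↦ if k ∣ n then 1 else 0

/-- The generating function of the partitions into parts of size at most `m`. -/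
noncomputable def boundedGenFun (m : ℕ) : ℝ⟦X⟧ := ∏ i ∈ Finset.range m, geomSeries (i + 1)

lemma boundedGenFun_succ (m : ℕ) :
    boundedGenFun (m + 1) = boundedGenFun m * geomSeries (m + 1) :=
  Finset.prod_range_succ _ _

lemma coeff_geomSeries_nonneg (k n : ℕ) : 0 ≤ coeff n (geomSeries k) := by
  simp only [geomSeries, coeff_mk]
  positivity

lemma coeff_boundedGenFun_nonneg (m n : ℕ) : 0 ≤ coeff n (boundedGenFun m) := by
  induction m generalizing n with
  | zero => simp only [boundedGenFun, Finset.range_zero, Finset.prod_empty, coeff_one]; positivity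
  | succ m ih =>
    rw [boundedGenFun_succ, coeff_mul]
    exact Finset.sum_nonneg fun x _ ↦ mul_nonneg (ih _) (coeff_geomSeries_nonneg _ _)

lemma monotone_coeff_boundedGenFun (n : ℕ) : Monotone fun m ↦ coeff n (boundedGenFun m) := by
  refine monotone_nat_of_le_succ fun m ↦ ?_
  have hconst : coeff n (boundedGenFun m) =
      coeff (n, 0).1 (boundedGenFun m) * coeff (n, 0).2 (geomSeries (m + 1)) := by
    simp [geomSeries]
  rw [boundedGenFun_succ, coeff_mul, hconst]
  exact Finset.single_le_sum (f := fun x : ℕ × ℕ ↦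
    coeff x.1 (boundedGenFun m) * coeff x.2 (geomSeries (m + 1)))
    (fun x _ ↦ mul_nonneg (coeff_boundedGenFun_nonneg _ _) (coeff_geomSeries_nonneg _ _)) (by simp)

lemma tsum_X_pow_mul {k : ℕ} (hk : k ≠ 0) : ∑' j : ℕ, (X : ℝ⟦X⟧) ^ (k * j) = geomSeries k := by
  refine HasSum.tsum_eq ((hasSum_iff_hasSum_coeff _).mpr fun n ↦ ?_)
  simp only [geomSeries, coeff_mk, coeff_X_pow]
  split_ifs with h
  · obtain ⟨c, rfl⟩ := h
    simpa only [mul_right_inj' hk, eq_comm] using hasSum_ite_eq c (1 : ℝ)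
  · convert! hasSum_zero using 3 with j
    exact if_neg fun hj ↦ h ⟨j, hj⟩

lemma hasProd_geomSeries :
    HasProd (fun i : ℕ ↦ geomSeries (i + 1)) (PowerSeries.mk fun n ↦ p n) := by
  convert! Nat.Partition.hasProd_powerSeriesMk_card_restricted ℝ (fun _ ↦ True) using 3 with i n
  · rw [if_pos trivial, tsum_X_pow_mul i.succ_ne_zero]
  · simp [p, Nat.Partition.restricted]

lemma tendsto_coeff_boundedGenFun (n : ℕ) :
    Tendsto (fun m ↦ coeff n (boundedGenFun m)) atTop (𝓝 (p n)) := by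
  have h := (tendsto_iff_coeff_tendsto _ _ _ _).mp hasProd_geomSeries.tendsto_prod_nat n
  simpa only [coeff_mk, boundedGenFun] using h

lemma coeff_boundedGenFun_le (m n : ℕ) : coeff n (boundedGenFun m) ≤ p n :=
  (monotone_coeff_boundedGenFun n).ge_of_tendsto (tendsto_coeff_boundedGenFun n) m

variable {𝕜 : Type*} [NormedField 𝕜]

/-- Euler's product `∏ (1 - q ^ n)` over `n ≥ 1`. -/
noncomputable def eulerProd (q : 𝕜) : 𝕜 := ∏' n : ℕ, (1 - q ^ (n + 1))

lemma norm_pow_succ_lt_one {q : 𝕜} (hq : ‖q‖ < 1) (n : ℕ) : ‖q ^ (n + 1)‖ < 1 := by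
  rw [norm_pow]
  exact pow_lt_one₀ (norm_nonneg q) hq n.succ_ne_zero

lemma one_sub_pow_succ_ne_zero {q : 𝕜} (hq : ‖q‖ < 1) (n : ℕ) : 1 - q ^ (n + 1) ≠ 0 := fun h ↦
  (norm_pow_succ_lt_one hq n).ne (by rw [← sub_eq_zero.mp h, norm_one])

lemma summable_norm_neg_pow_succ {q : 𝕜} (hq : ‖q‖ < 1) :
    Summable fun n : ℕ ↦ ‖-q ^ (n + 1)‖ := by
  simpa using (summable_nat_add_iff 1).mpr (summable_geometric_of_lt_one (norm_nonneg _) hq)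

lemma eulerProd_ne_zero [CompleteSpace 𝕜] {q : 𝕜} (hq : ‖q‖ < 1) : eulerProd q ≠ 0 := by
  simpa [eulerProd, sub_eq_add_neg] using tprod_one_add_ne_zero_of_summable
    (f := fun n : ℕ ↦ -q ^ (n + 1))
    (fun n ↦ by simpa [← sub_eq_add_neg] using one_sub_pow_succ_ne_zero hq n)
    (summable_norm_neg_pow_succ hq)

lemma tendsto_inv_prod_one_sub_pow [CompleteSpace 𝕜] {q : 𝕜} (hq : ‖q‖ < 1) :
    Tendsto (fun m ↦ (∏ i ∈ Finset.range m, (1 - q ^ (i + 1)))⁻¹) atTop (𝓝 (eulerProd q)⁻¹) := by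
  have hmul := multipliable_one_add_of_summable (f := fun n : ℕ ↦ -q ^ (n + 1))
    (summable_norm_neg_pow_succ hq)
  simp only [← sub_eq_add_neg] at hmul
  exact hmul.hasProd.tendsto_prod_nat.inv₀ (eulerProd_ne_zero hq)

variable [NormedAlgebra ℝ 𝕜]

/-- The real power series `f` converges absolutely at `z`, with value `v`. -/
def EvalsTo (f : ℝ⟦X⟧) (z v : 𝕜) : Prop :=
  (Summable fun n ↦ ‖coeff n f • z ^ n‖) ∧ HasSum (fun n ↦ coeff n f • z ^ n) v

lemma evalsTo_one (z : 𝕜) : EvalsTo 1 z 1 := by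
  have h0 : ∀ n ≠ 0, coeff n (1 : ℝ⟦X⟧) • z ^ n = 0 := fun n hn ↦ by simp [coeff_one, hn]
  refine ⟨summable_of_ne_finset_zero (s := {0}) fun n hn ↦ ?_, ?_⟩
  · rw [h0 n (by simpa using hn), norm_zero]
  · simpa using hasSum_single 0 h0

lemma evalsTo_geomSeries (k : ℕ) {z : 𝕜} (hz : ‖z‖ < 1) :
    EvalsTo (geomSeries (k + 1)) z (1 - z ^ (k + 1))⁻¹ := by
  have hinj : Function.Injective fun j : ℕ ↦ (k + 1) * j :=
    fun a b h ↦ Nat.eq_of_mul_eq_mul_left k.succ_pos h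
  have hzero : ∀ n ∉ Set.range (fun j : ℕ ↦ (k + 1) * j),
      coeff n (geomSeries (k + 1)) • z ^ n = 0 := fun n hn ↦ by
    have : ¬ (k + 1) ∣ n := fun ⟨c, hc⟩ ↦ hn ⟨c, hc.symm⟩
    simp [geomSeries, this]
  have hterm (j : ℕ) : coeff ((k + 1) * j) (geomSeries (k + 1)) • z ^ ((k + 1) * j) =
      (z ^ (k + 1)) ^ j := by
    simp [geomSeries, pow_mul]
  have hk := norm_pow_succ_lt_one hz k
  constructor
  · rw [← hinj.summable_iff fun n hn ↦ by rw [hzero n hn, norm_zero]]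
    simpa only [Function.comp_def, hterm, norm_pow (z ^ (k + 1))] using
      summable_geometric_of_lt_one (norm_nonneg _) hk
  · rw [← hinj.hasSum_iff hzero]
    simpa only [Function.comp_def, hterm] using hasSum_geometric_of_norm_lt_one hk

variable [CompleteSpace 𝕜]

lemma EvalsTo.mul {f g : ℝ⟦X⟧} {z v w : 𝕜} (hf : EvalsTo f z v) (hg : EvalsTo g z w) :
    EvalsTo (f * g) z (v * w) := by
  have cauchy (n : ℕ) : ∑ kl ∈ Finset.HasAntidiagonal.antidiagonal n,
      (coeff kl.1 f • z ^ kl.1) * (coeff kl.2 g • z ^ kl.2) = coeff n (f * g) • z ^ n := by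
    rw [coeff_mul, Finset.sum_smul]
    refine Finset.sum_congr rfl fun x hx ↦ ?_
    rw [smul_mul_smul_comm, ← pow_add, Finset.HasAntidiagonal.mem_antidiagonal.mp hx]
  have hnorm := summable_norm_sum_mul_antidiagonal_of_summable_norm hf.1 hg.1
  have htsum := tsum_mul_tsum_eq_tsum_sum_antidiagonal_of_summable_norm hf.1 hg.1
  simp only [cauchy, hf.2.tsum_eq, hg.2.tsum_eq] at hnorm htsum
  exact ⟨hnorm, htsum ▸ hnorm.of_norm.hasSum⟩

lemma evalsTo_boundedGenFun (m : ℕ) {z : 𝕜} (hz : ‖z‖ < 1) :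
    EvalsTo (boundedGenFun m) z (∏ i ∈ Finset.range m, (1 - z ^ (i + 1)))⁻¹ := by
  induction m with
  | zero => simpa [boundedGenFun] using evalsTo_one z
  | succ m ih =>
    rw [boundedGenFun_succ, Finset.prod_range_succ, mul_inv]
    exact ih.mul (evalsTo_geomSeries m hz)

lemma summable_p_mul_pow {r : ℝ} (hr0 : 0 ≤ r) (hr : r < 1) : Summable fun n ↦ p n * r ^ n := by
  have hnorm : ‖r‖ < 1 := by rwa [Real.norm_of_nonneg hr0]
  refine summable_of_sum_range_le (c := (eulerProd r)⁻¹)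
    (fun n ↦ mul_nonneg (p_pos n).le (by positivity)) fun N ↦ ?_
  have hpartial : Tendsto (fun m ↦ ∑ n ∈ Finset.range N, coeff n (boundedGenFun m) * r ^ n) atTop
      (𝓝 (∑ n ∈ Finset.range N, p n * r ^ n)) :=
    tendsto_finsetSum _ fun n _ ↦ (tendsto_coeff_boundedGenFun n).mul_const _
  refine le_of_tendsto_of_tendsto' hpartial (tendsto_inv_prod_one_sub_pow hnorm) fun m ↦ ?_
  exact sum_le_hasSum _ (fun n _ ↦ mul_nonneg (coeff_boundedGenFun_nonneg _ _) (by positivity))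
    (evalsTo_boundedGenFun m hnorm).2

lemma hasSum_p_smul_pow {q : 𝕜} (hq : ‖q‖ < 1) : HasSum (fun n ↦ p n • q ^ n) (eulerProd q)⁻¹ := by
  have hsum := summable_p_mul_pow (norm_nonneg q) hq
  have hbound {a b : ℝ} (n : ℕ) (ha : 0 ≤ a) (hab : a ≤ b) : ‖a • q ^ n‖ ≤ b * ‖q‖ ^ n := by
    rw [norm_smul, norm_pow, Real.norm_of_nonneg ha]
    gcongr
  have hlim := tendsto_tsum_of_dominated_convergence hsum
    (fun n ↦ (tendsto_coeff_boundedGenFun n).smul_const (q ^ n))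
    (Eventually.of_forall fun m n ↦
      hbound n (coeff_boundedGenFun_nonneg m n) (coeff_boundedGenFun_le m n))
  simp only [(evalsTo_boundedGenFun _ hq).2.tsum_eq] at hlim
  rw [tendsto_nhds_unique (tendsto_inv_prod_one_sub_pow hq) hlim]
  exact (Summable.of_norm_bounded hsum fun n ↦ hbound n (p_pos n).le le_rfl).hasSum

lemma norm_inv_eulerProd_sub_one_le {q : 𝕜} (hq : ‖q‖ ≤ 1 / 4) :
    ‖(eulerProd q)⁻¹ - 1‖ ≤ 4 * ‖q‖ := by
  have htail := (hasSum_nat_add_iff' (f := fun n ↦ p n • q ^ n) 1).mpr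
    (hasSum_p_smul_pow (by linarith))
  simp only [Finset.range_one, Finset.sum_singleton, p_zero, pow_zero, one_smul] at htail
  have hgeom : HasSum (fun n : ℕ ↦ 2 * ‖q‖ * (2 * ‖q‖) ^ n) (2 * ‖q‖ * (1 - 2 * ‖q‖)⁻¹) :=
    (hasSum_geometric_of_lt_one (by positivity) (by linarith)).mul_left _
  calc ‖(eulerProd q)⁻¹ - 1‖ ≤ 2 * ‖q‖ * (1 - 2 * ‖q‖)⁻¹ := by
        rw [← htail.tsum_eq]
        refine tsum_of_norm_bounded hgeom fun n ↦ ?_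
        rw [norm_smul, norm_pow, Real.norm_of_nonneg (p_pos _).le, ← pow_succ', mul_pow]
        gcongr
        exact p_le_two_pow _
    _ ≤ 4 * ‖q‖ := by
        rw [← div_eq_mul_inv, div_le_iff₀ (by linarith)]
        nlinarith [norm_nonneg q]

end GeneratingFunction

section Nome

open Filter Topology Complex MeasureTheory

/-- The nome `e ^ (2πiτ)` in the variable `s = -iτ`, which turns the upper half-plane into the right
half-plane and `τ ↦ -1 / τ` into `s ↦ s⁻¹`. -/
noncomputable def nome (s : ℂ) : ℂ := cexp (-(2 * π * s))

lemma norm_nome (s : ℂ) : ‖nome s‖ = rexp (-(2 * π * s.re)) := by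
  simp [nome, Complex.norm_exp]

lemma norm_nome_lt_one {s : ℂ} (hs : 0 < s.re) : ‖nome s‖ < 1 := by
  rw [norm_nome, Real.exp_lt_one_iff, neg_lt_zero]
  positivity

lemma re_add_ofReal_mul_I (y t : ℝ) : ((y : ℂ) + t * I).re = y := by simp

lemma norm_cexp_two_pi_nat_mul (n : ℕ) (s : ℂ) :
    ‖cexp (2 * π * n * s)‖ = rexp (2 * π * n * s.re) := by
  simp [Complex.norm_exp]

lemma integral_cexp_two_pi_int (k : ℤ) :
    ∫ t in (-(1 / 2) : ℝ)..(1 / 2), cexp (2 * π * I * k * t) = if k = 0 then 1 else 0 := by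
  split_ifs with hk
  · subst hk
    norm_num
  · have hc : (2 * π * I * k : ℂ) ≠ 0 := by simp [Real.pi_ne_zero, hk]
    have hperiodic : cexp (2 * π * I * k * ((1 / 2 : ℝ) : ℂ)) =
        cexp (2 * π * I * k * ((-(1 / 2) : ℝ) : ℂ)) :=
      Complex.exp_eq_exp_iff_exists_int.mpr ⟨k, by push_cast; ring⟩
    rw [integral_exp_mul_complex hc, hperiodic, sub_self, zero_div]

lemma integral_nome_pow_mul_cexp (m n : ℕ) (y : ℝ) :
    ∫ t in (-(1 / 2) : ℝ)..(1 / 2), nome (y + t * I) ^ m * cexp (2 * π * n * (y + t * I)) =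
      if m = n then 1 else 0 := by
  have hfun (t : ℝ) : nome (y + t * I) ^ m * cexp (2 * π * n * (y + t * I)) =
      cexp (2 * π * (n - m) * y) * cexp (2 * π * I * ((n - m : ℤ) : ℂ) * t) := by
    rw [nome, ← Complex.exp_nat_mul, ← Complex.exp_add, ← Complex.exp_add]
    congr 1
    push_cast
    ring
  simp_rw [hfun]
  rw [intervalIntegral.integral_const_mul, integral_cexp_two_pi_int]
  obtain rfl | hmn := eq_or_ne m n
  · simp
  · rw [if_neg hmn, if_neg (by omega), mul_zero]

lemma continuous_tsum_mul_nome_pow {a : ℕ → ℂ} {y : ℝ}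
    (ha : Summable fun m ↦ ‖a m‖ * rexp (-(2 * π * y)) ^ m) :
    Continuous fun t : ℝ ↦ ∑' m, a m * nome (y + t * I) ^ m := by
  refine continuous_tsum (fun m ↦ by unfold nome; fun_prop) ha fun m t ↦ ?_
  rw [norm_mul, norm_pow, norm_nome, re_add_ofReal_mul_I]

lemma integral_tsum_mul_nome_pow_mul_cexp {a : ℕ → ℂ} {y : ℝ}
    (ha : Summable fun m ↦ ‖a m‖ * rexp (-(2 * π * y)) ^ m) (n : ℕ) :
    ∫ t in (-(1 / 2) : ℝ)..(1 / 2),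
      (∑' m, a m * nome (y + t * I) ^ m) * cexp (2 * π * n * (y + t * I)) = a n := by
  have hnorm (m : ℕ) (t : ℝ) : ‖a m * nome (y + t * I) ^ m‖ = ‖a m‖ * rexp (-(2 * π * y)) ^ m := by
    rw [norm_mul, norm_pow, norm_nome, re_add_ofReal_mul_I]
  have hsum (t : ℝ) : Summable fun m ↦ a m * nome (y + t * I) ^ m :=
    .of_norm (by simpa only [hnorm] using ha)
  have hinterchange := intervalIntegral.hasSum_integral_of_dominated_convergence
    (μ := volume) (a := -(1 / 2)) (b := 1 / 2)
    (F := fun m (t : ℝ) ↦ a m * nome (y + t * I) ^ m * cexp (2 * π * n * (y + t * I)))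
    (f := fun t : ℝ ↦ (∑' m, a m * nome (y + t * I) ^ m) * cexp (2 * π * n * (y + t * I)))
    (fun m _ ↦ ‖a m‖ * rexp (-(2 * π * y)) ^ m * rexp (2 * π * n * y))
    (fun m ↦ (by unfold nome; fun_prop : Continuous _).aestronglyMeasurable)
    (fun m ↦ .of_forall fun t _ ↦ by
      rw [norm_mul, hnorm, norm_cexp_two_pi_nat_mul, re_add_ofReal_mul_I])
    (.of_forall fun t _ ↦ ha.mul_right _)
    intervalIntegrable_const
    (.of_forall fun t _ ↦ (hsum t).hasSum.mul_right _)
  simp only [mul_assoc (a _), intervalIntegral.integral_const_mul, integral_nome_pow_mul_cexp,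
    mul_ite, mul_one, mul_zero] at hinterchange
  exact hinterchange.unique (by simpa using hasSum_single n fun m hm ↦ if_neg hm)

lemma summable_norm_p_mul_exp_pow {y : ℝ} (hy : 0 < y) :
    Summable fun m ↦ ‖(p m : ℂ)‖ * rexp (-(2 * π * y)) ^ m := by
  have hlt : rexp (-(2 * π * y)) < 1 := Real.exp_lt_one_iff.mpr (neg_lt_zero.mpr (by positivity))
  simpa only [norm_real, Real.norm_of_nonneg (p_pos _).le] using
    summable_p_mul_pow (Real.exp_pos _).le hlt

lemma inv_eulerProd_nome_eq_tsum {s : ℂ} (hs : 0 < s.re) :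
    (eulerProd (nome s))⁻¹ = ∑' m, (p m : ℂ) * nome s ^ m := by
  rw [← (hasSum_p_smul_pow (norm_nome_lt_one hs)).tsum_eq]
  simp only [real_smul]

/-- Cauchy's integrand for `p n`, on the circle of radius `e ^ (-2πy)`. -/
noncomputable def circleIntegrand (n : ℕ) (y t : ℝ) : ℂ :=
  (eulerProd (nome (y + t * I)))⁻¹ * cexp (2 * π * n * (y + t * I))

lemma circleIntegrand_eq_tsum (n : ℕ) {y : ℝ} (hy : 0 < y) :
    circleIntegrand n y = fun t : ℝ ↦
      (∑' m, (p m : ℂ) * nome (y + t * I) ^ m) * cexp (2 * π * n * (y + t * I)) := by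
  ext t
  rw [circleIntegrand, inv_eulerProd_nome_eq_tsum (by rwa [re_add_ofReal_mul_I])]

lemma continuous_circleIntegrand (n : ℕ) {y : ℝ} (hy : 0 < y) :
    Continuous (circleIntegrand n y) := by
  rw [circleIntegrand_eq_tsum n hy]
  exact (continuous_tsum_mul_nome_pow (summable_norm_p_mul_exp_pow hy)).mul (by fun_prop)

lemma integral_circleIntegrand (n : ℕ) {y : ℝ} (hy : 0 < y) :
    ∫ t in (-(1 / 2) : ℝ)..(1 / 2), circleIntegrand n y t = p n := by
  rw [circleIntegrand_eq_tsum n hy]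
  exact integral_tsum_mul_nome_pow_mul_cexp (summable_norm_p_mul_exp_pow hy) n

end Nome

section ModularTransformation

open Complex

lemma eta_I_mul (s : ℂ) :
    ModularForm.eta (I * s) = cexp (-(π / 12 * s)) * eulerProd (nome s) := by
  rw [ModularForm.eta, eulerProd, Function.Periodic.qParam]
  congr 1
  · congr 1
    push_cast
    linear_combination (2 * π * s / 24) * I_sq
  · refine tprod_congr fun k ↦ ?_
    rw [ModularForm.eta_q_eq_pow, nome]
    congr 3
    linear_combination (2 * π * s) * I_sq

lemma sqrt_I_mul {s : ℂ} (hs : 0 < s.re) :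
    Complex.sqrt (I * s) = Complex.sqrt I * Complex.sqrt s := by
  have hs0 : s ≠ 0 := by rintro rfl; simp at hs
  have harg := abs_lt.mp (Complex.abs_arg_lt_pi_div_two_iff.mpr (Or.inl hs))
  rw [sqrt_eq_exp (mul_ne_zero I_ne_zero hs0), sqrt_eq_exp I_ne_zero, sqrt_eq_exp hs0,
    Complex.log_mul I_ne_zero hs0 (by rw [arg_I]; constructor <;> linarith), ← Complex.exp_add,
    add_div]

lemma eta_I_mul_inv {s : ℂ} (hs : 0 < s.re) :
    ModularForm.eta (I * s⁻¹) = Complex.sqrt s * ModularForm.eta (I * s) := by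
  have hs0 : s ≠ 0 := by rintro rfl; simp at hs
  have hI : Complex.sqrt I ≠ 0 := by
    rw [sqrt_eq_exp I_ne_zero]
    exact Complex.exp_ne_zero _
  have hmem : I * s ∈ UpperHalfPlane.upperHalfPlaneSet := by
    simpa [UpperHalfPlane.upperHalfPlaneSet] using hs
  have hinv : -1 / (I * s) = I * s⁻¹ := by
    field_simp
    rw [I_sq]
  have heta := ModularForm.eta_comp_eq_csqrt_I_inv hmem
  simp only [Function.comp_apply, hinv, Pi.smul_apply, Pi.mul_apply, smul_eq_mul,
    sqrt_I_mul hs] at heta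
  rw [heta]
  field_simp

lemma inv_eulerProd_nome {s : ℂ} (hs : 0 < s.re) :
    (eulerProd (nome s))⁻¹ = Complex.sqrt s * cexp (π / 12 * s⁻¹ - π / 12 * s) *
      (eulerProd (nome s⁻¹))⁻¹ := by
  have hs' : 0 < (s⁻¹).re := by
    rw [inv_re]
    exact div_pos hs (normSq_pos.mpr (by rintro rfl; simp at hs))
  have hne := eulerProd_ne_zero (norm_nome_lt_one hs)
  have hne_inv := eulerProd_ne_zero (norm_nome_lt_one hs')
  have heta := eta_I_mul_inv hs
  rw [eta_I_mul, eta_I_mul, Complex.exp_neg, Complex.exp_neg] at heta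
  rw [Complex.exp_sub]
  generalize eulerProd (nome s⁻¹) = A at hne_inv heta ⊢
  have hexp (w : ℂ) := Complex.exp_ne_zero w
  field_simp [hexp] at heta ⊢
  linear_combination heta

end ModularTransformation

section MinorArc

open Filter Topology Complex

lemma neg_log_norm_one_sub_le {w : ℂ} (hw : ‖w‖ < 1) :
    -Real.log ‖1 - w‖ - w.re ≤ -Real.log (1 - ‖w‖) - ‖w‖ := by
  have hseries {z : ℂ} (hz : ‖z‖ < 1) : HasSum
      (fun n : ℕ ↦ (z ^ n / n).re - if n = 1 then z.re else 0) (-Real.log ‖1 - z‖ - z.re) := by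
    have := (hasSum_re (hasSum_taylorSeries_neg_log hz)).sub (hasSum_ite_eq 1 z.re)
    rwa [neg_re, log_re] at this
  have hnorm : ‖1 - (‖w‖ : ℂ)‖ = 1 - ‖w‖ := by
    rw [← ofReal_one, ← ofReal_sub, norm_real, Real.norm_of_nonneg (by linarith)]
  have hright := hseries (z := ‖w‖) (by simpa using hw)
  rw [hnorm, ofReal_re] at hright
  refine hasSum_le (fun n ↦ ?_) (hseries hw) hright
  obtain rfl | hn := eq_or_ne n 1
  · simp
  · rw [if_neg hn, if_neg hn, sub_zero, sub_zero, ← ofReal_pow, ← ofReal_natCast, ← ofReal_div,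
      ofReal_re, ofReal_natCast]
    exact (re_le_norm _).trans_eq (by rw [norm_div, norm_pow, Complex.norm_natCast])

lemma norm_inv_one_sub_le {w : ℂ} (hw : ‖w‖ < 1) :
    ‖(1 - w)⁻¹‖ ≤ ‖(1 - (‖w‖ : ℂ))⁻¹‖ * rexp (w.re - ‖w‖) := by
  have hlog := neg_log_norm_one_sub_le hw
  have hpos : 0 < 1 - ‖w‖ := by linarith
  have hpos' : 0 < ‖1 - w‖ := hpos.trans_le (by simpa using norm_sub_norm_le 1 w)
  have hnorm : ‖1 - (‖w‖ : ℂ)‖ = 1 - ‖w‖ := by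
    rw [← ofReal_one, ← ofReal_sub, norm_real, Real.norm_of_nonneg hpos.le]
  rw [norm_inv, norm_inv, hnorm, ← Real.exp_log (inv_pos.mpr hpos'),
    ← Real.exp_log (inv_pos.mpr hpos), ← Real.exp_add, Real.exp_le_exp, Real.log_inv, Real.log_inv]
  linarith

lemma norm_inv_prod_one_sub_pow_le {q : ℂ} (hq : ‖q‖ < 1) (m : ℕ) :
    ‖(∏ i ∈ Finset.range m, (1 - q ^ (i + 1)))⁻¹‖ ≤
      ‖(∏ i ∈ Finset.range m, (1 - (‖q‖ : ℂ) ^ (i + 1)))⁻¹‖ *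
        rexp (∑ i ∈ Finset.range m, ((q ^ (i + 1)).re - ‖q‖ ^ (i + 1))) := by
  rw [Real.exp_sum, ← Finset.prod_inv_distrib, ← Finset.prod_inv_distrib, norm_prod, norm_prod,
    ← Finset.prod_mul_distrib]
  refine Finset.prod_le_prod (fun i _ ↦ norm_nonneg _) fun i _ ↦ ?_
  have h := norm_inv_one_sub_le (norm_pow_succ_lt_one hq i)
  rwa [norm_pow, ofReal_pow] at h

lemma norm_inv_eulerProd_le {q : ℂ} (hq : ‖q‖ < 1) :
    ‖(eulerProd q)⁻¹‖ ≤ ‖(eulerProd (‖q‖ : ℂ))⁻¹‖ *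
      rexp (‖q‖ / ‖1 - q‖ - ‖q‖ / (1 - ‖q‖)) := by
  have hq' : ‖(‖q‖ : ℂ)‖ < 1 := by simpa using hq
  have hsum : HasSum (fun i : ℕ ↦ (q ^ (i + 1)).re - ‖q‖ ^ (i + 1))
      ((q * (1 - q)⁻¹).re - ‖q‖ * (1 - ‖q‖)⁻¹) := by
    simpa only [pow_succ'] using
      (hasSum_re ((hasSum_geometric_of_norm_lt_one hq).mul_left q)).sub
        ((hasSum_geometric_of_lt_one (norm_nonneg q) hq).mul_left ‖q‖)
  have hre : (q * (1 - q)⁻¹).re ≤ ‖q‖ / ‖1 - q‖ := by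
    simpa only [norm_mul, norm_inv, div_eq_mul_inv] using re_le_norm (q * (1 - q)⁻¹)
  calc ‖(eulerProd q)⁻¹‖ ≤ ‖(eulerProd (‖q‖ : ℂ))⁻¹‖ *
        rexp ((q * (1 - q)⁻¹).re - ‖q‖ * (1 - ‖q‖)⁻¹) :=
        le_of_tendsto_of_tendsto' (tendsto_inv_prod_one_sub_pow hq).norm
          ((tendsto_inv_prod_one_sub_pow hq').norm.mul
            ((Real.continuous_exp.tendsto _).comp hsum.tendsto_sum_nat))
          (norm_inv_prod_one_sub_pow_le hq)
    _ ≤ _ := by rw [← div_eq_mul_inv ‖q‖]; gcongr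

lemma sq_norm_one_sub_nome (y t : ℝ) :
    ‖1 - nome (y + t * I)‖ ^ 2 =
      (1 - rexp (-(2 * π * y))) ^ 2 + 4 * rexp (-(2 * π * y)) * Real.sin (π * t) ^ 2 := by
  have hpolar : nome (y + t * I) =
      cexp (((-(2 * π * y) : ℝ) : ℂ) + ((-(2 * (π * t)) : ℝ) : ℂ) * I) := by
    rw [nome]; congr 1; push_cast; ring
  rw [hpolar, Complex.sq_norm, normSq_apply, sub_re, sub_im, exp_re, exp_im]
  simp only [add_re, add_im, ofReal_re, ofReal_im, mul_re, mul_im, I_re, I_im, mul_zero, mul_one,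
    sub_zero, zero_add, add_zero, one_re, one_im, Real.cos_neg, Real.sin_neg, Real.cos_two_mul',
    Real.sin_two_mul]
  linear_combination (rexp (-(2 * π * y)) ^ 2 * (Real.sin (π * t) ^ 2 + Real.cos (π * t) ^ 2 + 1)
    - 2 * rexp (-(2 * π * y))) * Real.sin_sq_add_cos_sq (π * t)

lemma four_mul_sq_le_sin_sq {t : ℝ} (ht : |t| ≤ 1 / 2) : 4 * t ^ 2 ≤ Real.sin (π * t) ^ 2 := by
  have h : 2 / π * |π * t| ≤ |Real.sin (π * t)| := Real.mul_abs_le_abs_sin (by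
    rw [abs_mul, abs_of_pos Real.pi_pos]; nlinarith [Real.pi_pos])
  rw [abs_mul, abs_of_pos Real.pi_pos, ← mul_assoc, div_mul_cancel₀ _ Real.pi_ne_zero] at h
  have hsq := pow_le_pow_left₀ (by positivity) h 2
  rw [sq_abs, mul_pow, sq_abs] at hsq
  linarith

lemma mul_one_sub_exp_le_norm_one_sub_nome {y t : ℝ} (hy0 : 0 < y) (hy : y ≤ 0.0046)
    (ht : 6 * y ≤ |t|) (ht' : |t| ≤ 1 / 2) :
    3.88 * (1 - rexp (-(2 * π * y))) ≤ ‖1 - nome (y + t * I)‖ := by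
  have hpi := Real.pi_lt_d4
  set r := rexp (-(2 * π * y))
  have hr : 1 - 2 * π * y ≤ r := by linarith [Real.add_one_le_exp (-(2 * π * y))]
  have hr' : r < 1 := Real.exp_lt_one_iff.mpr (neg_lt_zero.mpr (by positivity))
  have hr'' : 0.971 ≤ r := by nlinarith
  have hbase : (1 - r) ^ 2 ≤ 39.48 * y ^ 2 := by
    calc (1 - r) ^ 2 ≤ (2 * π * y) ^ 2 := pow_le_pow_left₀ (by linarith) (by linarith) 2
      _ = (2 * π) ^ 2 * y ^ 2 := mul_pow _ _ 2
      _ ≤ 39.48 * y ^ 2 := by gcongr; nlinarith [Real.pi_pos]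
  have hsin : 144 * y ^ 2 ≤ Real.sin (π * t) ^ 2 := by
    have := pow_le_pow_left₀ (by positivity) ht 2
    rw [sq_abs] at this
    linarith [four_mul_sq_le_sin_sq ht']
  refine le_of_sq_le_sq ?_ (norm_nonneg _)
  rw [sq_norm_one_sub_nome]
  nlinarith [mul_le_mul hr'' hsin (by positivity) (by linarith)]

lemma norm_nome_div_sub_div_le {y t : ℝ} (hy0 : 0 < y) (hy : y ≤ 0.0046)
    (ht : 6 * y ≤ |t|) (ht' : |t| ≤ 1 / 2) :
    ‖nome (y + t * I)‖ / ‖1 - nome (y + t * I)‖ -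
      ‖nome (y + t * I)‖ / (1 - ‖nome (y + t * I)‖) ≤ -(0.742 * (1 / (2 * π * y) - 1)) := by
  have hd := mul_one_sub_exp_le_norm_one_sub_nome hy0 hy ht ht'
  rw [norm_nome, re_add_ofReal_mul_I]
  have hx : 0 < 2 * π * y := by positivity
  have hr : 1 - 2 * π * y ≤ rexp (-(2 * π * y)) := by linarith [Real.add_one_le_exp (-(2 * π * y))]
  have hr' : 0 < 1 - rexp (-(2 * π * y)) :=
    sub_pos.mpr (Real.exp_lt_one_iff.mpr (neg_lt_zero.mpr hx))
  set r := rexp (-(2 * π * y))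
  have hfar : r / ‖1 - nome (y + t * I)‖ ≤ 0.258 * (r / (1 - r)) := by
    calc r / ‖1 - nome (y + t * I)‖ ≤ r / (3.88 * (1 - r)) := by gcongr
      _ = 3.88⁻¹ * (r / (1 - r)) := by field_simp
      _ ≤ 0.258 * (r / (1 - r)) := by gcongr; norm_num
  have hnear : 1 / (2 * π * y) - 1 ≤ r / (1 - r) := by
    rw [sub_le_iff_le_add, div_add_one hr'.ne']
    exact div_le_div₀ (by norm_num) (by linarith) hr' (by linarith)
  linarith

end MinorArc

section GaussianPrimitive

open Filter Topology Complex MeasureTheory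

lemma integrable_exp_neg_sq : Integrable fun t : ℝ ↦ rexp (-t ^ 2) := by
  simpa using integrable_exp_neg_mul_sq (b := 1) one_pos

lemma integral_Ioi_exp_neg_sq_le {b : ℝ} (hb : 1 ≤ b) :
    ∫ t in Set.Ioi b, rexp (-t ^ 2) ≤ rexp (-b ^ 2) := by
  have hderiv : ∀ x ∈ Set.Ici b,
      HasDerivAt (fun t ↦ -(1 / 2) * rexp (-t ^ 2)) (x * rexp (-x ^ 2)) x := fun x _ ↦ by
    refine ((hasDerivAt_pow 2 x).neg.exp.const_mul (-(1 / 2) : ℝ)).congr_deriv ?_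
    simp only [Pi.neg_apply]
    push_cast
    ring
  have hlim : Tendsto (fun t : ℝ ↦ -(1 / 2) * rexp (-t ^ 2)) atTop (𝓝 0) := by
    simpa using (Real.tendsto_exp_atBot.comp
      (tendsto_neg_atTop_atBot.comp (tendsto_pow_atTop two_ne_zero))).const_mul (-(1 / 2) : ℝ)
  have hpos : ∀ x ∈ Set.Ioi b, 0 ≤ x * rexp (-x ^ 2) := fun x hx ↦
    mul_nonneg (by linarith [Set.mem_Ioi.mp hx]) (Real.exp_pos _).le
  calc ∫ t in Set.Ioi b, rexp (-t ^ 2)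
      ≤ ∫ t in Set.Ioi b, t * rexp (-t ^ 2) :=
        setIntegral_mono_on integrable_exp_neg_sq.integrableOn
          (integrableOn_Ioi_deriv_of_nonneg' hderiv hpos hlim) measurableSet_Ioi fun x hx ↦
            le_mul_of_one_le_left (Real.exp_pos _).le (hb.trans (Set.mem_Ioi.mp hx).le)
    _ = 1 / 2 * rexp (-b ^ 2) := by
        rw [integral_Ioi_of_hasDerivAt_of_nonneg' hderiv hpos hlim]
        ring
    _ ≤ rexp (-b ^ 2) := by linarith [Real.exp_pos (-b ^ 2)]

lemma abs_integral_exp_neg_sq_sub_le {b : ℝ} (hb : 1 ≤ b) :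
    |(∫ t in (0 : ℝ)..b, rexp (-t ^ 2)) - √π / 2| ≤ rexp (-b ^ 2) := by
  have hhalf : ∫ t in Set.Ioi (0 : ℝ), rexp (-t ^ 2) = √π / 2 := by
    simpa using integral_gaussian_Ioi 1
  have htail : 0 ≤ ∫ t in Set.Ioi b, rexp (-t ^ 2) := integral_nonneg fun t ↦ (Real.exp_pos _).le
  rw [← intervalIntegral.integral_Ioi_sub_Ioi integrable_exp_neg_sq.integrableOn (by linarith),
    hhalf, sub_sub_cancel_left, abs_neg, abs_of_nonneg htail]
  exact integral_Ioi_exp_neg_sq_le hb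

/-- The primitive of `z ↦ e ^ (z ^ 2)` that vanishes at `0` (a multiple of the imaginary error
function). -/
noncomputable def expSqPrimitive (z : ℂ) : ℂ := wedgeIntegral 0 z fun w ↦ cexp (w ^ 2)

lemma hasDerivAt_expSqPrimitive (z : ℂ) : HasDerivAt expSqPrimitive (cexp (z ^ 2)) z := by
  have hd : Differentiable ℂ fun w : ℂ ↦ cexp (w ^ 2) := by fun_prop
  exact hd.differentiableOn.isConservativeOn.hasDerivAt_wedgeIntegral
    hd.continuous.continuousOn (r := ‖z‖ + 1) (by simp)

lemma expSqPrimitive_zero : expSqPrimitive 0 = 0 := by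
  simp [expSqPrimitive, wedgeIntegral]

lemma expSqPrimitive_mul_I (b : ℝ) :
    expSqPrimitive (b * I) = ((∫ t in (0 : ℝ)..b, rexp (-t ^ 2) : ℝ) : ℂ) * I := by
  simp [expSqPrimitive, wedgeIntegral, mul_pow, ← intervalIntegral.integral_ofReal, mul_comm]

lemma expSqPrimitive_neg (z : ℂ) : expSqPrimitive (-z) = -expSqPrimitive z := by
  have hd (x : ℂ) : HasDerivAt (fun x ↦ expSqPrimitive x + expSqPrimitive (-x)) 0 x := by
    refine ((hasDerivAt_expSqPrimitive x).add
      ((hasDerivAt_expSqPrimitive (-x)).comp x (hasDerivAt_neg x))).congr_deriv ?_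
    rw [neg_sq]
    ring
  have hconst := is_const_of_deriv_eq_zero (fun x ↦ (hd x).differentiableAt)
    (fun x ↦ (hd x).deriv) z 0
  simp only [neg_zero, expSqPrimitive_zero, add_zero] at hconst
  exact (neg_eq_of_add_eq_zero_right hconst).symm

lemma norm_cexp_sq (z : ℂ) : ‖cexp (z ^ 2)‖ = rexp (z.re ^ 2 - z.im ^ 2) := by
  simp [norm_exp, sq]

lemma norm_expSqPrimitive_sub_le {z w : ℂ} {c : ℝ}
    (hc : ∀ x ∈ segment ℝ z w, x.re ^ 2 - x.im ^ 2 ≤ c) :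
    ‖expSqPrimitive w - expSqPrimitive z‖ ≤ rexp c * ‖w - z‖ := by
  refine (convex_segment (𝕜 := ℝ) z w).norm_image_sub_le_of_norm_hasDerivWithin_le
    (fun x _ ↦ (hasDerivAt_expSqPrimitive x).hasDerivWithinAt) (fun x hx ↦ ?_)
    (left_mem_segment ℝ _ _) (right_mem_segment ℝ _ _)
  rw [norm_cexp_sq, Real.exp_le_exp]
  exact hc x hx

lemma norm_expSqPrimitive_le {w : ℂ} (hw : w.im ^ 2 ≤ w.re ^ 2) :
    ‖expSqPrimitive w‖ ≤ ‖w‖ * rexp (w.re ^ 2 - w.im ^ 2) := by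
  have h := norm_expSqPrimitive_sub_le (z := 0) (w := w) (c := w.re ^ 2 - w.im ^ 2) (by
    rintro x ⟨a, b, ha, hb, hab, rfl⟩
    have hre : (a • (0 : ℂ) + b • w).re = b * w.re := by simp
    have him : (a • (0 : ℂ) + b • w).im = b * w.im := by simp
    rw [hre, him, mul_pow, mul_pow, ← mul_sub]
    exact mul_le_of_le_one_left (by linarith) (pow_le_one₀ hb (by linarith)))
  rwa [expSqPrimitive_zero, sub_zero, sub_zero, mul_comm] at h

lemma norm_expSqPrimitive_sub_expSqPrimitive_im_le (w : ℂ) :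
    ‖expSqPrimitive w - expSqPrimitive (w.im * I)‖ ≤ ‖w‖ * rexp (w.re ^ 2 - w.im ^ 2) := by
  have hhor : w - w.im * I = w.re := by linear_combination -(re_add_im w)
  calc ‖expSqPrimitive w - expSqPrimitive (w.im * I)‖
      ≤ rexp (w.re ^ 2 - w.im ^ 2) * ‖w - w.im * I‖ := by
        refine norm_expSqPrimitive_sub_le ?_
        rintro x ⟨a, b, ha, hb, hab, rfl⟩
        have hre : (a • ((w.im : ℂ) * I) + b • w).re = b * w.re := by simp
        have him : (a • ((w.im : ℂ) * I) + b • w).im = w.im := by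
          simp only [real_smul, add_im, mul_im, ofReal_re, ofReal_im, I_re, I_im, mul_re]
          linear_combination w.im * hab
        rw [hre, him, mul_pow]
        gcongr
        exact mul_le_of_le_one_left (sq_nonneg w.re) (pow_le_one₀ hb (by linarith))
    _ ≤ ‖w‖ * rexp (w.re ^ 2 - w.im ^ 2) := by
        rw [hhor, norm_real, mul_comm]
        gcongr
        exact abs_re_le_norm w

lemma norm_expSqPrimitive_sub_sqrt_pi_le {w : ℂ} (hw : 0 < w.im)
    (hw' : w.re ^ 2 + 1 ≤ w.im ^ 2) :
    ‖expSqPrimitive w - √π / 2 * I‖ ≤ (‖w‖ + 1) * rexp (w.re ^ 2 - w.im ^ 2) := by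
  have haxis : ‖expSqPrimitive (w.im * I) - √π / 2 * I‖ ≤ rexp (w.re ^ 2 - w.im ^ 2) := by
    have hval : expSqPrimitive (w.im * I) - √π / 2 * I =
        (((∫ t in (0 : ℝ)..w.im, rexp (-t ^ 2)) - √π / 2 : ℝ) : ℂ) * I := by
      rw [expSqPrimitive_mul_I]; push_cast; ring
    rw [hval, norm_mul, norm_I, mul_one, norm_real]
    refine (abs_integral_exp_neg_sq_sub_le (by nlinarith [sq_nonneg w.re])).trans ?_
    exact Real.exp_le_exp.mpr (by linarith [sq_nonneg w.re])
  linarith [norm_sub_le_norm_sub_add_norm_sub (expSqPrimitive w) (expSqPrimitive (w.im * I))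
    (√π / 2 * I), norm_expSqPrimitive_sub_expSqPrimitive_im_le w]

lemma norm_expSqPrimitive_sub_sign_le {w : ℂ} (hw : w.re ^ 2 + 1 ≤ w.im ^ 2) :
    ‖expSqPrimitive w - Real.sign w.im * (√π / 2 * I)‖ ≤
      (‖w‖ + 1) * rexp (w.re ^ 2 - w.im ^ 2) := by
  obtain him | him | him := lt_trichotomy w.im 0
  · have h := norm_expSqPrimitive_sub_sqrt_pi_le (w := -w) (by simpa using him) (by simpa using hw)
    rw [expSqPrimitive_neg, ← norm_neg] at h
    simpa [Real.sign_of_neg him, add_comm] using h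
  · nlinarith [sq_nonneg w.re]
  · simpa [Real.sign_of_pos him] using norm_expSqPrimitive_sub_sqrt_pi_le him hw

end GaussianPrimitive

section BesselPrimitive

open Complex

variable {σ : ℂ} {r κ : ℝ}

lemma complexSqrt_sq (s : ℂ) : Complex.sqrt s ^ 2 = s := by
  rw [Complex.sqrt, cpow_ofNat_inv_pow]

lemma complexSqrt_ne_zero (hs : σ ≠ 0) : Complex.sqrt σ ≠ 0 := fun h ↦
  hs (by rw [← complexSqrt_sq σ, h, zero_pow two_ne_zero])

lemma re_complexSqrt_pos (hσ : 0 < σ.re) : 0 < (Complex.sqrt σ).re := by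
  rw [Complex.sqrt, cpow_inv_two_re, Real.sqrt_pos]
  linarith [norm_nonneg σ]

lemma norm_complexSqrt_sq (s : ℂ) : ‖Complex.sqrt s‖ ^ 2 = ‖s‖ := by
  rw [← norm_pow, complexSqrt_sq]

lemma ne_zero_of_zero_lt_re (hσ : 0 < σ.re) : σ ≠ 0 := by
  rintro rfl
  exact lt_irrefl 0 hσ

lemma hasDerivAt_complexSqrt (hσ : 0 < σ.re) :
    HasDerivAt Complex.sqrt (1 / (2 * Complex.sqrt σ)) σ := by
  have hσ0 := ne_zero_of_zero_lt_re hσ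
  refine (Complex.hasDerivAt_sqrt (Or.inl hσ)).congr_deriv ?_
  have hinv : σ ^ (-1 / 2 : ℂ) * Complex.sqrt σ = 1 := by
    rw [Complex.sqrt, ← Complex.cpow_add _ _ hσ0]
    norm_num
  rw [div_eq_div_iff two_ne_zero (mul_ne_zero two_ne_zero (complexSqrt_ne_zero hσ0))]
  linear_combination 2 * hinv

/-- The integrand `√σ * e ^ (κ (σ + 1 / σ))`, whose integral along a vertical line is, up to
normalisation, the modified Bessel function of order `3 / 2` at `2 κ`. -/
noncomputable def besselIntegrand (κ : ℝ) (σ : ℂ) : ℂ :=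
  Complex.sqrt σ * cexp (κ * (σ + σ⁻¹))

/-- An explicit primitive of `besselIntegrand (r ^ 2)` on the right half-plane; it exists because
a Bessel function of half-integral order is elementary. -/
noncomputable def besselPrimitive (r : ℝ) (σ : ℂ) : ℂ :=
  (besselIntegrand (r ^ 2) σ +
    (r - 1 / (2 * r)) *
      (cexp (2 * r ^ 2) * expSqPrimitive (r * (Complex.sqrt σ - (Complex.sqrt σ)⁻¹))) -
    (r + 1 / (2 * r)) *
      (cexp (-(2 * r ^ 2)) * expSqPrimitive (r * (Complex.sqrt σ + (Complex.sqrt σ)⁻¹)))) / r ^ 2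

lemma sq_complexSqrt_sub_inv (hσ : σ ≠ 0) (r : ℝ) :
    (r * (Complex.sqrt σ - (Complex.sqrt σ)⁻¹)) ^ 2 = (r ^ 2 : ℝ) * (σ + σ⁻¹ - (2 : ℝ)) := by
  have hu := complexSqrt_ne_zero hσ
  have hsq := complexSqrt_sq σ
  generalize Complex.sqrt σ = u at hu hsq ⊢
  subst hsq
  push_cast
  field_simp
  ring

lemma sq_complexSqrt_add_inv (hσ : σ ≠ 0) (r : ℝ) :
    (r * (Complex.sqrt σ + (Complex.sqrt σ)⁻¹)) ^ 2 = (r ^ 2 : ℝ) * (σ + σ⁻¹ + (2 : ℝ)) := by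
  have hu := complexSqrt_ne_zero hσ
  have hsq := complexSqrt_sq σ
  generalize Complex.sqrt σ = u at hu hsq ⊢
  subst hsq
  push_cast
  field_simp
  ring

lemma hasDerivAt_exp_mul_expSqPrimitive_sub (hσ : 0 < σ.re) (r : ℝ) :
    HasDerivAt (fun σ ↦
        cexp (2 * r ^ 2) * expSqPrimitive (r * (Complex.sqrt σ - (Complex.sqrt σ)⁻¹)))
      (r / (2 * Complex.sqrt σ) * (1 + σ⁻¹) * cexp (r ^ 2 * (σ + σ⁻¹))) σ := by
  have hσ0 := ne_zero_of_zero_lt_re hσ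
  have hd := hasDerivAt_complexSqrt hσ
  refine (((hasDerivAt_expSqPrimitive _).comp σ
    ((hd.sub (hd.inv (complexSqrt_ne_zero hσ0))).const_mul (r : ℂ))).const_mul
    (cexp (2 * r ^ 2))).congr_deriv ?_
  have hexp : cexp (2 * r ^ 2) * cexp ((r * (Complex.sqrt σ - (Complex.sqrt σ)⁻¹)) ^ 2) =
      cexp (r ^ 2 * (σ + σ⁻¹)) := by
    rw [sq_complexSqrt_sub_inv hσ0, ← Complex.exp_add]
    push_cast
    ring_nf
  simp only [Pi.sub_apply, Pi.inv_apply, complexSqrt_sq]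
  rw [← mul_assoc, hexp]
  ring

lemma hasDerivAt_exp_mul_expSqPrimitive_add (hσ : 0 < σ.re) (r : ℝ) :
    HasDerivAt (fun σ ↦
        cexp (-(2 * r ^ 2)) * expSqPrimitive (r * (Complex.sqrt σ + (Complex.sqrt σ)⁻¹)))
      (r / (2 * Complex.sqrt σ) * (1 - σ⁻¹) * cexp (r ^ 2 * (σ + σ⁻¹))) σ := by
  have hσ0 := ne_zero_of_zero_lt_re hσ
  have hd := hasDerivAt_complexSqrt hσ
  refine (((hasDerivAt_expSqPrimitive _).comp σ
    ((hd.add (hd.inv (complexSqrt_ne_zero hσ0))).const_mul (r : ℂ))).const_mul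
    (cexp (-(2 * r ^ 2)))).congr_deriv ?_
  have hexp : cexp (-(2 * r ^ 2)) * cexp ((r * (Complex.sqrt σ + (Complex.sqrt σ)⁻¹)) ^ 2) =
      cexp (r ^ 2 * (σ + σ⁻¹)) := by
    rw [sq_complexSqrt_add_inv hσ0, ← Complex.exp_add]
    push_cast
    ring_nf
  simp only [Pi.add_apply, Pi.inv_apply, complexSqrt_sq]
  rw [← mul_assoc, hexp]
  ring

lemma hasDerivAt_besselIntegrand (hσ : 0 < σ.re) (κ : ℝ) :
    HasDerivAt (besselIntegrand κ)
      ((1 / (2 * Complex.sqrt σ) + κ * Complex.sqrt σ * (1 - (σ ^ 2)⁻¹)) *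
        cexp (κ * (σ + σ⁻¹))) σ := by
  have hσ0 := ne_zero_of_zero_lt_re hσ
  refine ((hasDerivAt_complexSqrt hσ).mul
    (((hasDerivAt_id σ).add (hasDerivAt_inv hσ0)).const_mul (κ : ℂ)).cexp).congr_deriv ?_
  simp only [Pi.add_apply, id_eq]
  ring

lemma hasDerivAt_besselPrimitive (hr : r ≠ 0) (hσ : 0 < σ.re) :
    HasDerivAt (besselPrimitive r) (besselIntegrand (r ^ 2) σ) σ := by
  have hr' : (r : ℂ) ≠ 0 := ofReal_ne_zero.mpr hr
  have hu := complexSqrt_ne_zero (ne_zero_of_zero_lt_re hσ)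
  refine ((((hasDerivAt_besselIntegrand hσ (r ^ 2)).add
    ((hasDerivAt_exp_mul_expSqPrimitive_sub hσ r).const_mul ((r : ℂ) - 1 / (2 * r)))).sub
    ((hasDerivAt_exp_mul_expSqPrimitive_add hσ r).const_mul
      ((r : ℂ) + 1 / (2 * r)))).div_const ((r : ℂ) ^ 2)).congr_deriv ?_
  rw [besselIntegrand, ofReal_pow]
  generalize cexp (r ^ 2 * (σ + σ⁻¹)) = X
  have hsq := complexSqrt_sq σ
  generalize Complex.sqrt σ = u at hu hsq ⊢
  subst hsq
  field_simp
  ring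

lemma re_sq_sub_im_sq (z : ℂ) : z.re ^ 2 - z.im ^ 2 = (z ^ 2).re := by
  rw [sq z, mul_re]
  ring

lemma re_sq_sub_im_sq_complexSqrt_sub_inv (hσ : σ ≠ 0) (r : ℝ) :
    (r * (Complex.sqrt σ - (Complex.sqrt σ)⁻¹)).re ^ 2 -
      (r * (Complex.sqrt σ - (Complex.sqrt σ)⁻¹)).im ^ 2 = r ^ 2 * ((σ + σ⁻¹).re - 2) := by
  rw [re_sq_sub_im_sq, sq_complexSqrt_sub_inv hσ, re_ofReal_mul, sub_re, ofReal_re]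

lemma re_sq_sub_im_sq_complexSqrt_add_inv (hσ : σ ≠ 0) (r : ℝ) :
    (r * (Complex.sqrt σ + (Complex.sqrt σ)⁻¹)).re ^ 2 -
      (r * (Complex.sqrt σ + (Complex.sqrt σ)⁻¹)).im ^ 2 = r ^ 2 * ((σ + σ⁻¹).re + 2) := by
  rw [re_sq_sub_im_sq, sq_complexSqrt_add_inv hσ, re_ofReal_mul, add_re _ ((2 : ℝ) : ℂ), ofReal_re]

lemma zero_lt_re_add_inv (hσ : 0 < σ.re) : 0 < (σ + σ⁻¹).re := by
  rw [add_re, inv_re]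
  have := normSq_pos.mpr (ne_zero_of_zero_lt_re hσ)
  positivity

lemma sign_mul_of_pos {a b : ℝ} (ha : 0 < a) : Real.sign (a * b) = Real.sign b := by
  obtain hb | rfl | hb := lt_trichotomy b 0
  · rw [Real.sign_of_neg hb, Real.sign_of_neg (mul_neg_of_pos_of_neg ha hb)]
  · rw [mul_zero]
  · rw [Real.sign_of_pos hb, Real.sign_of_pos (mul_pos ha hb)]

lemma sign_im_complexSqrt_sub_inv (hr : 0 < r) (hσ : 0 < σ.re) :
    Real.sign (r * (Complex.sqrt σ - (Complex.sqrt σ)⁻¹)).im = Real.sign σ.im := by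
  have hσ0 := ne_zero_of_zero_lt_re hσ
  have hre := re_complexSqrt_pos hσ
  have hu := normSq_pos.mpr (complexSqrt_ne_zero hσ0)
  have him : σ.im = 2 * (Complex.sqrt σ).re * (Complex.sqrt σ).im := by
    nth_rw 1 [← complexSqrt_sq σ]
    rw [sq, mul_im]
    ring
  have him' : (r * (Complex.sqrt σ - (Complex.sqrt σ)⁻¹)).im =
      r * (1 + 1 / normSq (Complex.sqrt σ)) * (Complex.sqrt σ).im := by
    rw [im_ofReal_mul, sub_im, inv_im]
    ring
  rw [him, him', sign_mul_of_pos (by positivity), sign_mul_of_pos (by positivity)]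

lemma norm_cexp_ofReal_mul_sq (a r : ℝ) : ‖cexp (a * r ^ 2)‖ = rexp (a * r ^ 2) := by
  rw [← ofReal_pow, ← ofReal_mul, norm_exp, ofReal_re]

lemma norm_exp_mul_expSqPrimitive_sub_le (hr : 0 < r) (hσ : 0 < σ.re)
    (h : 1 ≤ r ^ 2 * (2 - (σ + σ⁻¹).re)) :
    ‖cexp (2 * r ^ 2) * (expSqPrimitive (r * (Complex.sqrt σ - (Complex.sqrt σ)⁻¹)) -
        Real.sign σ.im * (√π / 2 * I))‖ ≤
      (r * (‖Complex.sqrt σ‖ + ‖Complex.sqrt σ‖⁻¹) + 1) * rexp (r ^ 2 * (σ + σ⁻¹).re) := by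
  have hre := re_sq_sub_im_sq_complexSqrt_sub_inv (ne_zero_of_zero_lt_re hσ) r
  set w := (r : ℂ) * (Complex.sqrt σ - (Complex.sqrt σ)⁻¹) with hw
  have hE := norm_expSqPrimitive_sub_sign_le (w := w) (by linarith)
  rw [sign_im_complexSqrt_sub_inv hr hσ, hre] at hE
  have hnorm : ‖w‖ ≤ r * (‖Complex.sqrt σ‖ + ‖Complex.sqrt σ‖⁻¹) := by
    rw [hw, norm_mul, norm_real, Real.norm_of_nonneg hr.le, ← norm_inv]
    gcongr
    exact norm_sub_le _ _
  have hA : ‖cexp (2 * (r : ℂ) ^ 2)‖ = rexp (2 * r ^ 2) := mod_cast norm_cexp_ofReal_mul_sq 2 r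
  rw [norm_mul, hA]
  calc rexp (2 * r ^ 2) * _
      ≤ rexp (2 * r ^ 2) * ((r * (‖Complex.sqrt σ‖ + ‖Complex.sqrt σ‖⁻¹) + 1) *
          rexp (r ^ 2 * ((σ + σ⁻¹).re - 2))) := by
        gcongr
        exact hE.trans (by gcongr)
    _ = _ := by
        rw [mul_left_comm, ← Real.exp_add]
        ring_nf

lemma norm_exp_mul_expSqPrimitive_add_le (hr : 0 ≤ r) (hσ : 0 < σ.re) :
    ‖cexp (-(2 * r ^ 2)) * expSqPrimitive (r * (Complex.sqrt σ + (Complex.sqrt σ)⁻¹))‖ ≤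
      r * (‖Complex.sqrt σ‖ + ‖Complex.sqrt σ‖⁻¹) * rexp (r ^ 2 * (σ + σ⁻¹).re) := by
  have hre := re_sq_sub_im_sq_complexSqrt_add_inv (ne_zero_of_zero_lt_re hσ) r
  have hpos := zero_lt_re_add_inv hσ
  set w := (r : ℂ) * (Complex.sqrt σ + (Complex.sqrt σ)⁻¹) with hw
  have hE := norm_expSqPrimitive_le (w := w) (by
    rw [← sub_nonneg, hre]
    positivity)
  rw [hre] at hE
  have hnorm : ‖w‖ ≤ r * (‖Complex.sqrt σ‖ + ‖Complex.sqrt σ‖⁻¹) := by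
    rw [hw, norm_mul, norm_real, Real.norm_of_nonneg hr, ← norm_inv]
    gcongr
    exact norm_add_le _ _
  have hB : ‖cexp (-(2 * (r : ℂ) ^ 2))‖ = rexp (-(2 * r ^ 2)) := by
    simpa [neg_mul] using norm_cexp_ofReal_mul_sq (-2) r
  rw [norm_mul, hB]
  calc rexp (-(2 * r ^ 2)) * _
      ≤ rexp (-(2 * r ^ 2)) * (r * (‖Complex.sqrt σ‖ + ‖Complex.sqrt σ‖⁻¹) *
          rexp (r ^ 2 * ((σ + σ⁻¹).re + 2))) := by
        gcongr
        exact hE.trans (by gcongr)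
    _ = _ := by
        rw [mul_left_comm, ← Real.exp_add]
        ring_nf

lemma norm_besselIntegrand (κ : ℝ) (σ : ℂ) :
    ‖besselIntegrand κ σ‖ = ‖Complex.sqrt σ‖ * rexp (κ * (σ + σ⁻¹).re) := by
  rw [besselIntegrand, norm_mul, norm_exp, re_ofReal_mul]

lemma norm_besselPrimitive_sub_le (hr : 0 < r) (hσ : 0 < σ.re)
    (h : 1 ≤ r ^ 2 * (2 - (σ + σ⁻¹).re)) :
    ‖besselPrimitive r σ -
        (r - 1 / (2 * r)) * (cexp (2 * r ^ 2) * (Real.sign σ.im * (√π / 2 * I))) / r ^ 2‖ ≤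
      (‖Complex.sqrt σ‖ + r +
        (2 * r ^ 2 + 1 / 2) * (‖Complex.sqrt σ‖ + ‖Complex.sqrt σ‖⁻¹)) / r ^ 2 *
          rexp (r ^ 2 * (σ + σ⁻¹).re) := by
  have hsub := norm_exp_mul_expSqPrimitive_sub_le hr hσ h
  have hadd := norm_exp_mul_expSqPrimitive_add_le hr.le hσ
  have hbessel := norm_besselIntegrand (r ^ 2) σ
  have hcsub : ‖(r : ℂ) - 1 / (2 * r)‖ ≤ r := by
    have hle : 1 / (2 * r) ≤ 2 * r := by
      rw [div_le_iff₀ (by positivity)]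
      nlinarith [mul_pos (pow_pos hr 2) (zero_lt_re_add_inv hσ)]
    have hcast : (r : ℂ) - 1 / (2 * r) = (r - 1 / (2 * r) : ℝ) := by push_cast; rfl
    rw [hcast, norm_real, Real.norm_eq_abs, abs_le]
    constructor <;> linarith [show 0 < 1 / (2 * r) by positivity]
  have hcadd : ‖(r : ℂ) + 1 / (2 * r)‖ = r + 1 / (2 * r) := by
    have hcast : (r : ℂ) + 1 / (2 * r) = (r + 1 / (2 * r) : ℝ) := by push_cast; rfl
    rw [hcast, norm_real, Real.norm_of_nonneg (by positivity)]
  set M := ‖Complex.sqrt σ‖ + ‖Complex.sqrt σ‖⁻¹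
  set e := rexp (r ^ 2 * (σ + σ⁻¹).re)
  rw [besselPrimitive, ← sub_div, norm_div, norm_pow, norm_real, Real.norm_of_nonneg hr.le,
    div_mul_eq_mul_div _ _ e, sub_right_comm, add_sub_assoc, ← mul_sub, ← mul_sub]
  refine div_le_div_of_nonneg_right ?_ (sq_nonneg r)
  calc ‖_‖ ≤ ‖Complex.sqrt σ‖ * e + r * ((r * M + 1) * e) + (r + 1 / (2 * r)) * (r * M * e) := by
        refine (norm_sub_le _ _).trans (add_le_add ((norm_add_le _ _).trans ?_) ?_)
        · rw [hbessel, norm_mul]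
          gcongr
        · rw [norm_mul, hcadd]
          gcongr
    _ = (‖Complex.sqrt σ‖ + r + (2 * r ^ 2 + 1 / 2) * M) * e := by
        field_simp
        ring

lemma re_one_add_mul_I (v : ℝ) : (1 + v * I : ℂ).re = 1 := by simp

lemma re_inv_one_add_mul_I (v : ℝ) : ((1 + v * I : ℂ)⁻¹).re = 1 / (1 + v ^ 2) := by
  simp [inv_re, normSq_apply, sq]

lemma re_one_add_mul_I_add_inv (v : ℝ) :
    ((1 + v * I : ℂ) + (1 + v * I : ℂ)⁻¹).re = 1 + 1 / (1 + v ^ 2) := by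
  rw [add_re, re_one_add_mul_I, re_inv_one_add_mul_I]

lemma one_le_norm_complexSqrt_one_add_mul_I (v : ℝ) : 1 ≤ ‖Complex.sqrt (1 + v * I)‖ := by
  refine (one_le_sq_iff₀ (norm_nonneg _)).mp ?_
  rw [norm_complexSqrt_sq]
  exact (re_one_add_mul_I v).ge.trans (re_le_norm _)

lemma norm_complexSqrt_one_add_mul_I_le {v : ℝ} (hv : |v| ≤ 6) :
    ‖Complex.sqrt (1 + v * I)‖ ≤ 3 := by
  have hnorm : ‖(1 + v * I : ℂ)‖ ≤ 1 + 6 := by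
    refine (norm_add_le _ _).trans ?_
    rw [norm_one, norm_mul, norm_I, mul_one, norm_real]
    gcongr
    exact hv
  refine (sq_le_sq₀ (norm_nonneg _) zero_le_three).mp ?_
  rw [norm_complexSqrt_sq]
  linarith

lemma norm_besselPrimitive_endpoint_sub_le (hr : 2 ≤ r) {v : ℝ} (hv : |v| = 6) :
    ‖besselPrimitive r (1 + v * I) -
        (r - 1 / (2 * r)) * (cexp (2 * r ^ 2) * (Real.sign v * (√π / 2 * I))) / r ^ 2‖ ≤
      14 * rexp (38 / 37 * r ^ 2) := by
  have hr0 : 0 < r := by linarith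
  have hre : ((1 + v * I : ℂ) + (1 + v * I : ℂ)⁻¹).re = 38 / 37 := by
    rw [re_one_add_mul_I_add_inv, ← sq_abs, hv]
    norm_num
  have him : (1 + v * I : ℂ).im = v := by simp
  have h := norm_besselPrimitive_sub_le (σ := 1 + v * I) hr0
    (by rw [re_one_add_mul_I]; exact one_pos) (by rw [hre]; nlinarith)
  rw [hre, him, mul_comm (r ^ 2)] at h
  refine h.trans ?_
  have hlow := one_le_norm_complexSqrt_one_add_mul_I v
  have hup := norm_complexSqrt_one_add_mul_I_le hv.le
  have hinv := inv_le_one_of_one_le₀ hlow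
  gcongr
  rw [div_le_iff₀ (by positivity)]
  nlinarith

lemma continuous_besselIntegrand (κ : ℝ) :
    Continuous fun v : ℝ ↦ besselIntegrand κ (1 + v * I) := by
  refine continuous_iff_continuousAt.mpr fun v ↦ ?_
  exact (hasDerivAt_besselIntegrand (σ := 1 + v * I) (by rw [re_one_add_mul_I]; exact one_pos)
    κ).continuousAt.comp (f := fun v : ℝ ↦ (1 + v * I : ℂ)) (by fun_prop)

lemma integral_besselIntegrand (hr : r ≠ 0) (a b : ℝ) :
    ∫ v in a..b, besselIntegrand (r ^ 2) (1 + v * I) =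
      (besselPrimitive r (1 + b * I) - besselPrimitive r (1 + a * I)) / I := by
  rw [sub_div]
  refine intervalIntegral.integral_eq_sub_of_hasDerivAt
    (f := fun v : ℝ ↦ besselPrimitive r (1 + v * I) / I) (fun v _ ↦ ?_)
    ((continuous_besselIntegrand (r ^ 2)).intervalIntegrable _ _)
  have hline : HasDerivAt (fun t : ℂ ↦ 1 + t * I) I v := by
    simpa using ((hasDerivAt_id (v : ℂ)).mul_const I).const_add 1
  have hprim := hasDerivAt_besselPrimitive (σ := 1 + v * I) hr
    (by rw [re_one_add_mul_I]; exact one_pos)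
  exact ((hprim.comp (v : ℂ) hline).div_const I).comp_ofReal.congr_deriv
    (mul_div_cancel_right₀ _ I_ne_zero)

lemma norm_integral_besselIntegrand_sq_sub_le (hr : 2 ≤ r) :
    ‖(∫ v in (-6 : ℝ)..6, besselIntegrand (r ^ 2) (1 + v * I)) -
        ((√π * rexp (2 * r ^ 2) * (r - 1 / (2 * r)) / r ^ 2 : ℝ) : ℂ)‖ ≤
      28 * rexp (38 / 37 * r ^ 2) := by
  have hpos := norm_besselPrimitive_endpoint_sub_le hr (v := 6) (by norm_num)
  have hneg := norm_besselPrimitive_endpoint_sub_le hr (v := -6) (by norm_num)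
  rw [Real.sign_of_pos (by norm_num)] at hpos
  rw [Real.sign_of_neg (by norm_num)] at hneg
  have hI : ∀ z : ℂ, ‖z‖ = ‖I * z‖ := fun z ↦ by rw [norm_mul, norm_I, one_mul]
  rw [integral_besselIntegrand (by linarith), hI, mul_sub, mul_div_cancel₀ _ I_ne_zero]
  refine le_trans (le_of_eq (congrArg norm ?_)) ((norm_sub_le_of_le hpos hneg).trans (by linarith))
  push_cast
  ring

lemma norm_integral_besselIntegrand_sub_le (hκ : 4 ≤ κ) :
    ‖(∫ v in (-6 : ℝ)..6, besselIntegrand κ (1 + v * I)) -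
        ((√(π / κ) * (rexp (2 * κ) * (1 - 1 / (2 * κ))) : ℝ) : ℂ)‖ ≤
      28 * rexp (38 / 37 * κ) := by
  obtain ⟨r, hr, rfl⟩ : ∃ r, 2 ≤ r ∧ r ^ 2 = κ :=
    ⟨√κ, Real.le_sqrt_of_sq_le (by linarith), Real.sq_sqrt (by linarith)⟩
  have hr0 : 0 < r := by linarith
  have hmain : √(π / r ^ 2) * (rexp (2 * r ^ 2) * (1 - 1 / (2 * r ^ 2))) =
      √π * rexp (2 * r ^ 2) * (r - 1 / (2 * r)) / r ^ 2 := by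
    rw [Real.sqrt_div' _ (sq_nonneg r), Real.sqrt_sq hr0.le]
    field_simp
  rw [hmain]
  exact norm_integral_besselIntegrand_sq_sub_le hr

end BesselPrimitive

section CircleMethod

open Complex MeasureTheory

/-- The exponent `μ` of the Hardy–Ramanujan formula: `p n` grows like `e ^ (mu n)` up to powers of
`n`. -/
noncomputable def mu (x : ℝ) : ℝ := π * √(24 * x - 1) / 6

/-- The abscissa of the vertical line of integration for `p n`: the saddle point of the main part
of the integrand. -/
noncomputable def saddle (x : ℝ) : ℝ := 1 / √(24 * x - 1)

variable {x : ℝ} {n : ℕ}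

lemma mu_pos_iff : 0 < mu x ↔ 0 < 24 * x - 1 := by
  rw [mu, div_pos_iff_of_pos_right (by norm_num), mul_pos_iff_of_pos_left pi_pos, Real.sqrt_pos]

lemma saddle_pos (hμ : 0 < mu x) : 0 < saddle x :=
  one_div_pos.mpr (Real.sqrt_pos.mpr (mu_pos_iff.mp hμ))

lemma saddle_sq (hμ : 0 < mu x) : saddle x ^ 2 = 1 / (24 * x - 1) := by
  rw [saddle, div_pow, one_pow, Real.sq_sqrt (mu_pos_iff.mp hμ).le]

lemma mu_mul_saddle (hμ : 0 < mu x) : mu x * saddle x = π / 6 := by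
  have := Real.sqrt_pos.mpr (mu_pos_iff.mp hμ)
  rw [mu, saddle]
  field_simp

lemma saddle_le (hμ : 116 ≤ mu x) : saddle x ≤ 0.0046 := by
  nlinarith [mu_mul_saddle (x := x) (by linarith), pi_lt_d4, saddle_pos (x := x) (by linarith)]

lemma one_le_two_mul_mu_mul_saddle (hμ : 0 < mu x) : 1 ≤ 2 * (mu x * saddle x) := by
  rw [mu_mul_saddle hμ]
  linarith [pi_gt_three]

lemma complexSqrt_ofReal_mul {y : ℝ} {s : ℂ} (hy : 0 < y) (hs : s ≠ 0) :
    Complex.sqrt (y * s) = √y * Complex.sqrt s := by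
  rw [sqrt_eq_exp (mul_ne_zero (ofReal_ne_zero.mpr hy.ne') hs), sqrt_eq_exp hs,
    Complex.log_ofReal_mul hy hs, add_div, Complex.exp_add, Real.sqrt_eq_rpow,
    Real.rpow_def_of_pos hy]
  push_cast
  ring_nf

lemma re_inv_saddle_mul (hμ : 0 < mu x) (v : ℝ) :
    2 * π * ((saddle x * (1 + v * I) : ℂ)⁻¹).re = 12 * mu x / (1 + v ^ 2) := by
  have hy := saddle_pos hμ
  rw [mul_inv, ← ofReal_inv, re_ofReal_mul, re_inv_one_add_mul_I]
  field_simp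
  linarith [mu_mul_saddle hμ]

lemma circleIntegrand_saddle_mul (hμ : 0 < mu n) (v : ℝ) :
    circleIntegrand n (saddle n) (saddle n * v) =
      √(saddle n) * besselIntegrand (mu n / 2) (1 + v * I) *
        (eulerProd (nome (saddle n * (1 + v * I))⁻¹))⁻¹ := by
  have hy := saddle_pos hμ
  have hre := re_one_add_mul_I v
  have hz : (1 + v * I : ℂ) ≠ 0 := ne_zero_of_zero_lt_re (by rw [hre]; exact one_pos)
  have hs : ((saddle n : ℝ) : ℂ) + (saddle n * v : ℝ) * I = saddle n * (1 + v * I) := by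
    push_cast
    ring
  have hπ : (π : ℂ) = 6 * mu n * saddle n := by
    exact_mod_cast (by linarith [mu_mul_saddle hμ] : π = 6 * mu n * saddle n)
  have hy2 : (saddle n : ℂ) ^ 2 * (24 * n - 1) = 1 := by
    have h := saddle_sq hμ
    rw [eq_div_iff (mu_pos_iff.mp hμ).ne'] at h
    exact_mod_cast h
  have hexp : π / 12 * (saddle n * (1 + v * I) : ℂ)⁻¹ - π / 12 * (saddle n * (1 + v * I)) +
      2 * π * n * (saddle n * (1 + v * I)) =
      (mu n / 2 : ℝ) * ((1 + v * I) + (1 + v * I : ℂ)⁻¹) := by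
    have hy' : (saddle n : ℂ) ≠ 0 := ofReal_ne_zero.mpr hy.ne'
    push_cast
    generalize (1 + v * I : ℂ) = z at hz
    rw [hπ]
    field_simp
    linear_combination 12 * mu n * z ^ 2 * hy2
  rw [circleIntegrand, hs, inv_eulerProd_nome (by rw [re_ofReal_mul, hre]; positivity),
    complexSqrt_ofReal_mul hy hz, besselIntegrand, ← hexp, Complex.exp_add]
  ring

lemma norm_nome_inv_saddle_mul_le (hμ : 0 < mu x) {v : ℝ} (hv : |v| ≤ 6) :
    ‖nome (saddle x * (1 + v * I))⁻¹‖ ≤ rexp (-(12 / 37 * mu x)) := by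
  have hv2 : v ^ 2 ≤ 36 := by nlinarith [sq_abs v, abs_nonneg v]
  rw [norm_nome, re_inv_saddle_mul hμ, Real.exp_le_exp, neg_le_neg_iff, le_div_iff₀ (by positivity)]
  nlinarith

lemma norm_besselIntegrand_le {κ : ℝ} (hκ : 0 ≤ κ) {v : ℝ} (hv : |v| ≤ 6) :
    ‖besselIntegrand κ (1 + v * I)‖ ≤ 3 * rexp (2 * κ) := by
  rw [norm_besselIntegrand, re_one_add_mul_I_add_inv]
  have hinv : 1 / (1 + v ^ 2) ≤ 1 := by
    rw [div_le_one (by positivity)]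
    linarith [sq_nonneg v]
  refine mul_le_mul (norm_complexSqrt_one_add_mul_I_le hv) ?_ (Real.exp_pos _).le zero_le_three
  rw [Real.exp_le_exp]
  nlinarith

lemma exp_neg_mu_le (hμ : 10 ≤ mu x) : rexp (-(12 / 37 * mu x)) ≤ 1 / 4 := by
  rw [Real.exp_neg, ← one_div]
  exact one_div_le_one_div_of_le (by norm_num)
    (by linarith [Real.add_one_le_exp (12 / 37 * mu x)])

lemma norm_inv_eulerProd_nome_sub_one_le (hμ : 10 ≤ mu x) {v : ℝ} (hv : |v| ≤ 6) :
    ‖(eulerProd (nome (saddle x * (1 + v * I))⁻¹))⁻¹ - 1‖ ≤ 4 * rexp (-(12 / 37 * mu x)) := by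
  have hq := norm_nome_inv_saddle_mul_le (x := x) (by linarith) hv
  exact (norm_inv_eulerProd_sub_one_le (hq.trans (exp_neg_mu_le hμ))).trans (by gcongr)

lemma norm_circleIntegrand_sub_besselIntegrand_le (hμ : 10 ≤ mu n) {v : ℝ} (hv : |v| ≤ 6) :
    ‖circleIntegrand n (saddle n) (saddle n * v) -
        √(saddle n) * besselIntegrand (mu n / 2) (1 + v * I)‖ ≤
      √(saddle n) * (12 * rexp (25 / 37 * mu n)) := by
  rw [circleIntegrand_saddle_mul (by linarith), ← mul_sub_one, norm_mul, norm_mul, norm_real,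
    Real.norm_of_nonneg (Real.sqrt_nonneg _)]
  calc √(saddle n) * ‖besselIntegrand (mu n / 2) (1 + v * I)‖ *
        ‖(eulerProd (nome (saddle n * (1 + v * I))⁻¹))⁻¹ - 1‖
      ≤ √(saddle n) * (3 * rexp (2 * (mu n / 2))) * (4 * rexp (-(12 / 37 * mu n))) := by
        gcongr
        · exact norm_besselIntegrand_le (by linarith) hv
        · exact norm_inv_eulerProd_nome_sub_one_le hμ hv
    _ = √(saddle n) * (12 * (rexp (2 * (mu n / 2)) * rexp (-(12 / 37 * mu n)))) := by ring
    _ = √(saddle n) * (12 * rexp (25 / 37 * mu n)) := by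
        rw [← Real.exp_add]
        ring_nf

lemma norm_circleIntegrand_eq (n : ℕ) (y t : ℝ) :
    ‖circleIntegrand n y t‖ = ‖(eulerProd (nome (y + t * I)))⁻¹‖ * rexp (2 * π * n * y) := by
  rw [circleIntegrand, norm_mul, norm_cexp_two_pi_nat_mul, re_add_ofReal_mul_I]

lemma norm_circleIntegrand_le_mul_exp {y t : ℝ} (hy0 : 0 < y) (hy : y ≤ 0.0046)
    (ht : 6 * y ≤ |t|) (ht' : |t| ≤ 1 / 2) :
    ‖circleIntegrand n y t‖ ≤
      ‖circleIntegrand n y 0‖ * rexp (-(0.742 * (1 / (2 * π * y) - 1))) := by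
  have hre := re_add_ofReal_mul_I y t
  have hle := norm_inv_eulerProd_le (norm_nome_lt_one (s := y + t * I) (by rw [hre]; exact hy0))
  have hreal : ((‖nome (y + t * I)‖ : ℝ) : ℂ) = nome (y + (0 : ℝ) * I) := by
    rw [norm_nome, hre, nome]
    push_cast
    ring_nf
  rw [hreal] at hle
  rw [norm_circleIntegrand_eq, norm_circleIntegrand_eq,
    mul_right_comm _ (rexp (2 * π * n * y))]
  gcongr
  refine hle.trans (mul_le_mul_of_nonneg_left ?_ (norm_nonneg _))
  exact Real.exp_le_exp.mpr (norm_nome_div_sub_div_le hy0 hy ht ht')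

lemma norm_circleIntegrand_zero_le (hμ : 10 ≤ mu n) :
    ‖circleIntegrand n (saddle n) 0‖ ≤ 2 * √(saddle n) * rexp (mu n) := by
  have hmu0 : 0 < mu n := by linarith
  have hδ := norm_inv_eulerProd_nome_sub_one_le (x := n) (v := 0) hμ (by norm_num)
  have hnorm : ‖besselIntegrand (mu n / 2) (1 + (0 : ℝ) * I)‖ = rexp (mu n) := by
    rw [norm_besselIntegrand, re_one_add_mul_I_add_inv]
    norm_num
  have htwo : ‖(eulerProd (nome (saddle n * (1 + (0 : ℝ) * I))⁻¹))⁻¹‖ ≤ 2 := by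
    have h := norm_sub_norm_le (eulerProd (nome (saddle n * (1 + (0 : ℝ) * I))⁻¹))⁻¹ 1
    rw [norm_one] at h
    linarith [exp_neg_mu_le hμ]
  rw [← mul_zero (saddle n), circleIntegrand_saddle_mul hmu0, norm_mul, norm_mul, hnorm, norm_real,
    Real.norm_of_nonneg (Real.sqrt_nonneg _), mul_comm, ← mul_assoc]
  gcongr

lemma norm_circleIntegrand_le (hμ : 116 ≤ mu n) {t : ℝ} (ht : 6 * saddle n ≤ |t|)
    (ht' : |t| ≤ 1 / 2) :
    ‖circleIntegrand n (saddle n) t‖ ≤ 2 * √(saddle n) * rexp (0.785 * mu n) := by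
  have hμ0 : 0 < mu n := by linarith
  have hy := saddle_pos hμ0
  have hsaving : 0.215 * mu n ≤ 0.742 * (1 / (2 * π * saddle n) - 1) := by
    have hinv : 1 / (2 * π * saddle n) = 3 * mu n / π ^ 2 := by
      have hπ := mu_mul_saddle hμ0
      field_simp
      linarith
    have hlow : 0.303 * mu n ≤ 3 * mu n / π ^ 2 := by
      rw [le_div_iff₀ (by positivity)]
      nlinarith [pi_lt_d4, pi_pos, (by nlinarith [pi_lt_d4, pi_pos] : π ^ 2 ≤ 9.9)]
    rw [hinv]
    linarith
  calc ‖circleIntegrand n (saddle n) t‖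
      ≤ ‖circleIntegrand n (saddle n) 0‖ *
          rexp (-(0.742 * (1 / (2 * π * saddle n) - 1))) :=
        norm_circleIntegrand_le_mul_exp hy (saddle_le hμ) ht ht'
    _ ≤ 2 * √(saddle n) * rexp (mu n) * rexp (-(0.215 * mu n)) := by
        gcongr
        exact norm_circleIntegrand_zero_le (by linarith)
    _ = 2 * √(saddle n) * rexp (0.785 * mu n) := by
        rw [mul_assoc, ← Real.exp_add]
        ring_nf

lemma norm_integral_sub_integral_le {E : Type*} [NormedAddCommGroup E] [NormedSpace ℝ E]
    {f : ℝ → E} (hf : Continuous f) {a b C : ℝ} (hb : 0 ≤ b) (hba : b ≤ a)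
    (hC : ∀ t, b ≤ |t| → |t| ≤ a → ‖f t‖ ≤ C) :
    ‖(∫ t in (-a)..a, f t) - ∫ t in (-b)..b, f t‖ ≤ 2 * (a - b) * C := by
  have hint (u v : ℝ) : IntervalIntegrable f volume u v := hf.intervalIntegrable u v
  have hsplit : (∫ t in (-a)..a, f t) - ∫ t in (-b)..b, f t =
      (∫ t in (-a)..(-b), f t) + ∫ t in b..a, f t := by
    rw [← intervalIntegral.integral_add_adjacent_intervals (hint (-a) (-b)) (hint (-b) a),
      ← intervalIntegral.integral_add_adjacent_intervals (hint (-b) b) (hint b a)]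
    abel
  have hleft : ‖∫ t in (-a)..(-b), f t‖ ≤ C * |-b - -a| := by
    refine intervalIntegral.norm_integral_le_of_norm_le_const fun t ht ↦ ?_
    rw [Set.uIoc_of_le (by linarith)] at ht
    have habs : |t| = -t := abs_of_nonpos (by linarith [ht.2])
    exact hC t (by linarith [ht.2]) (by linarith [ht.1])
  have hright : ‖∫ t in b..a, f t‖ ≤ C * |a - b| := by
    refine intervalIntegral.norm_integral_le_of_norm_le_const fun t ht ↦ ?_
    rw [Set.uIoc_of_le hba] at ht
    have habs : |t| = t := abs_of_nonneg (by linarith [ht.1])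
    exact hC t (by linarith [ht.1]) (by linarith [ht.2])
  rw [neg_sub_neg, abs_of_nonneg (by linarith)] at hleft
  rw [abs_of_nonneg (by linarith)] at hright
  rw [hsplit]
  linarith [norm_add_le_of_le hleft hright]

lemma norm_p_sub_integral_le (hμ : 116 ≤ mu n) :
    ‖(p n : ℂ) - saddle n * ∫ v in (-6 : ℝ)..6, circleIntegrand n (saddle n) (saddle n * v)‖ ≤
      2 * √(saddle n) * rexp (0.785 * mu n) := by
  have hy := saddle_pos (x := n) (by linarith)
  have hle := saddle_le hμ
  have hscale : saddle n * ∫ v in (-6 : ℝ)..6, circleIntegrand n (saddle n) (saddle n * v) =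
      ∫ t in (-(6 * saddle n))..(6 * saddle n), circleIntegrand n (saddle n) t := by
    rw [← real_smul, intervalIntegral.smul_integral_comp_mul_left]
    congr 1 <;> ring
  rw [hscale, ← integral_circleIntegrand n hy]
  refine (norm_integral_sub_integral_le (continuous_circleIntegrand n hy) (by positivity)
    (by linarith) fun t ht ht' ↦ norm_circleIntegrand_le hμ ht ht').trans ?_
  exact mul_le_of_le_one_left (by positivity) (by linarith)

lemma norm_integral_circleIntegrand_sub_le (hμ : 10 ≤ mu n) :
    ‖(∫ v in (-6 : ℝ)..6, circleIntegrand n (saddle n) (saddle n * v)) -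
        √(saddle n) * ∫ v in (-6 : ℝ)..6, besselIntegrand (mu n / 2) (1 + v * I)‖ ≤
      √(saddle n) * (144 * rexp (25 / 37 * mu n)) := by
  have hf : Continuous fun v ↦ circleIntegrand n (saddle n) (saddle n * v) :=
    (continuous_circleIntegrand n (saddle_pos (by linarith))).comp (continuous_const_mul _)
  have hg : Continuous fun v : ℝ ↦
      (√(saddle n) : ℂ) * besselIntegrand (mu n / 2) (1 + v * I) :=
    continuous_const.mul (continuous_besselIntegrand _)
  rw [← intervalIntegral.integral_const_mul, ← intervalIntegral.integral_sub
    (hf.intervalIntegrable _ _) (hg.intervalIntegrable _ _)]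
  refine (intervalIntegral.norm_integral_le_of_norm_le_const
    (C := √(saddle n) * (12 * rexp (25 / 37 * mu n))) fun v hv ↦ ?_).trans_eq ?_
  · rw [Set.uIoc_of_le (by norm_num)] at hv
    exact norm_circleIntegrand_sub_besselIntegrand_le hμ (abs_le.mpr ⟨hv.1.le, hv.2⟩)
  · norm_num
    ring

/-- The leading term of the Hardy–Ramanujan–Rademacher series for `p n`. -/
noncomputable def mainTerm (x : ℝ) : ℝ :=
  √12 / (24 * x - 1) * rexp (mu x) * (1 - 1 / mu x)

lemma mainTerm_eq (hμ : 0 < mu x) :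
    mainTerm x = √12 * saddle x ^ 2 * (rexp (mu x) * (1 - 1 / mu x)) := by
  rw [mainTerm, saddle_sq hμ]
  ring

lemma mainTerm_pos (hμ : 1 < mu x) : 0 < mainTerm x := by
  have hinv : 1 / mu x < 1 := (div_lt_one (by linarith)).mpr hμ
  have hy := saddle_pos (x := x) (by linarith)
  rw [mainTerm_eq (by linarith)]
  exact mul_pos (by positivity) (mul_pos (Real.exp_pos _) (sub_pos.mpr hinv))

lemma norm_saddle_mul_integral_besselIntegrand_sub_mainTerm_le (hμ : 10 ≤ mu x) :
    ‖saddle x * (√(saddle x) * ∫ v in (-6 : ℝ)..6, besselIntegrand (mu x / 2) (1 + v * I)) -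
        mainTerm x‖ ≤
      saddle x * (√(saddle x) * (28 * rexp (19 / 37 * mu x))) := by
  have hμ0 : 0 < mu x := by linarith
  have hy := saddle_pos hμ0
  have hbessel := norm_integral_besselIntegrand_sub_le (κ := mu x / 2) (by linarith)
  have hratio : √(saddle x) * √(π / (mu x / 2)) = √12 * saddle x := by
    have hdiv : π / (mu x / 2) = 12 * saddle x := by
      have := mu_mul_saddle hμ0
      field_simp
      linarith
    rw [hdiv, Real.sqrt_mul (by norm_num), mul_left_comm, Real.mul_self_sqrt hy.le]
  have hmain : mainTerm x = saddle x * (√(saddle x) *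
      (√(π / (mu x / 2)) * (rexp (2 * (mu x / 2)) * (1 - 1 / (2 * (mu x / 2)))))) := by
    rw [mainTerm_eq hμ0, ← mul_assoc √(saddle x), hratio, mul_div_cancel₀ _ two_ne_zero]
    ring
  rw [hmain, ofReal_mul, ofReal_mul (√(saddle x)), ← mul_sub, ← mul_sub, norm_mul, norm_mul,
    norm_real, norm_real, Real.norm_of_nonneg hy.le, Real.norm_of_nonneg (Real.sqrt_nonneg _)]
  gcongr
  exact hbessel.trans_eq (by ring_nf)

lemma abs_p_sub_mainTerm_le_sum (hμ : 116 ≤ mu n) :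
    |p n - mainTerm n| ≤ 2 * √(saddle n) * rexp (0.785 * mu n) +
      saddle n * (√(saddle n) * (144 * rexp (25 / 37 * mu n))) +
      saddle n * (√(saddle n) * (28 * rexp (19 / 37 * mu n))) := by
  have hy := saddle_pos (x := n) (by linarith)
  have hminor := norm_p_sub_integral_le hμ
  have hmajor := mul_le_mul_of_nonneg_left
    (norm_integral_circleIntegrand_sub_le (n := n) (by linarith)) hy.le
  have hbessel := norm_saddle_mul_integral_besselIntegrand_sub_mainTerm_le (x := n) (by linarith)
  nth_rw 1 [← Real.norm_of_nonneg hy.le, ← norm_real, ← norm_mul, mul_sub] at hmajor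
  rw [← Real.norm_eq_abs, ← norm_real, ofReal_sub]
  exact (norm_sub_le_norm_sub_add_norm_sub _ _ _).trans
    (add_le_add ((norm_sub_le_norm_sub_add_norm_sub _ _ _).trans (add_le_add hminor hmajor))
      hbessel)

lemma pow_six_mul_exp_neg_le {t : ℝ} (ht : 116 ≤ t) : t ^ 6 * rexp (-(0.215 * t)) ≤ 64 := by
  have ht0 : 0 < t := by linarith
  have hlog : Real.log t ≤ 7 * Real.log 2 + (t / 128 - 1) := by
    have h := Real.log_le_sub_one_of_pos (by positivity : 0 < t / 128)
    rw [Real.log_div ht0.ne' (by norm_num), show (128 : ℝ) = 2 ^ 7 by norm_num,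
      Real.log_pow] at h
    push_cast at h
    linarith
  have h64 : rexp (6 * Real.log 2) = 64 := by
    rw [mul_comm, Real.exp_mul, Real.exp_log two_pos]
    norm_num
  rw [← h64, ← Real.exp_log (by positivity : 0 < t ^ 6), ← Real.exp_add, Real.exp_le_exp,
    Real.log_pow]
  push_cast
  linarith [Real.log_two_lt_d9]

lemma exp_sum_le {t : ℝ} (ht : 116 ≤ t) :
    144 * rexp (25 / 37 * t) + 28 * rexp (19 / 37 * t) ≤ rexp (0.785 * t) := by
  have hsmall : 172 * rexp (-12) ≤ 1 := by
    have hpow : rexp (-12) = rexp (-1) ^ 12 := by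
      rw [← Real.exp_nat_mul]
      norm_num
    have hle : rexp (-1) ^ 12 ≤ 0.37 ^ 12 :=
      pow_le_pow_left₀ (Real.exp_pos _).le (by linarith [Real.exp_neg_one_lt_d9]) 12
    rw [hpow]
    exact (mul_le_mul_of_nonneg_left hle (by norm_num)).trans (by norm_num)
  have hexp {c : ℝ} (hc : c ≤ 0.68) : rexp (c * t) ≤ rexp (0.785 * t) * rexp (-12) := by
    rw [← Real.exp_add, Real.exp_le_exp]
    nlinarith
  have hmajor := hexp (c := 25 / 37) (by norm_num)
  have hbessel := hexp (c := 19 / 37) (by norm_num)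
  nlinarith [Real.exp_pos (0.785 * t)]

lemma abs_p_sub_mainTerm_le_exp (hμ : 116 ≤ mu n) :
    |p n - mainTerm n| ≤ 2.1 * √(saddle n) * rexp (0.785 * mu n) := by
  have hy := saddle_pos (x := n) (by linarith)
  have hs := Real.sqrt_pos.mpr hy
  have hsum := abs_p_sub_mainTerm_le_sum hμ
  have hexp := mul_le_mul_of_nonneg_left (exp_sum_le hμ) (mul_pos hy hs).le
  have hsmall := mul_le_mul_of_nonneg_right (saddle_le hμ)
    (mul_pos hs (Real.exp_pos (0.785 * mu n))).le
  linarith [mul_pos hs (Real.exp_pos (0.785 * mu n))]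

lemma le_mainTerm (hμ : 116 ≤ mu x) : 3 * (saddle x ^ 2 * rexp (mu x)) ≤ mainTerm x := by
  have hsqrt : 3.1 ≤ √12 := Real.le_sqrt_of_sq_le (by norm_num)
  have hinv : 1 / mu x ≤ 1 / 116 := one_div_le_one_div_of_le (by norm_num) hμ
  calc 3 * (saddle x ^ 2 * rexp (mu x))
      ≤ 3.1 * (1 - 1 / 116) * (saddle x ^ 2 * rexp (mu x)) := by gcongr; norm_num
    _ ≤ √12 * (1 - 1 / mu x) * (saddle x ^ 2 * rexp (mu x)) := by gcongr
    _ = mainTerm x := by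
        rw [mainTerm_eq (by linarith)]
        ring

lemma abs_p_sub_mainTerm_le (hμ : 116 ≤ mu n) :
    |p n - mainTerm n| ≤ 16 * mainTerm n / mu n ^ 4 := by
  have hμ0 : 0 < mu n := by linarith
  have hsqrt : √(saddle n) ≤ 0.068 :=
    Real.sqrt_le_iff.mpr ⟨by norm_num, (saddle_le hμ).trans (by norm_num)⟩
  have hsq : 1 ≤ 4 * (mu n ^ 2 * saddle n ^ 2) := by
    have := one_le_two_mul_mu_mul_saddle hμ0
    nlinarith
  have hexp : rexp (0.785 * mu n) = rexp (mu n) * rexp (-(0.215 * mu n)) := by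
    rw [← Real.exp_add]
    ring_nf
  rw [le_div_iff₀ (by positivity)]
  calc |p n - mainTerm n| * mu n ^ 4
      ≤ 2.1 * √(saddle n) * rexp (0.785 * mu n) * mu n ^ 4 := by
        gcongr
        exact abs_p_sub_mainTerm_le_exp hμ
    _ ≤ 2.1 * 0.068 * rexp (0.785 * mu n) * mu n ^ 4 * (4 * (mu n ^ 2 * saddle n ^ 2)) :=
        (le_mul_of_one_le_right (by positivity) hsq).trans (by gcongr)
    _ = 0.5712 * (mu n ^ 6 * rexp (-(0.215 * mu n))) * (saddle n ^ 2 * rexp (mu n)) := by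
        rw [hexp]
        ring
    _ ≤ 0.5712 * 64 * (saddle n ^ 2 * rexp (mu n)) := by
        gcongr
        exact pow_six_mul_exp_neg_le hμ
    _ ≤ 16 * (3 * (saddle n ^ 2 * rexp (mu n))) := by
        rw [← mul_assoc 16]
        exact mul_le_mul_of_nonneg_right (by norm_num) (by positivity)
    _ ≤ 16 * mainTerm n := by
        gcongr
        exact le_mainTerm hμ

end CircleMethod

section LogMainTerm

variable {x : ℝ} {n : ℕ}

lemma le_mu (hx : 2094 ≤ x) : 116 ≤ mu x := by
  have hsqrt : 224 ≤ √(24 * x - 1) := Real.le_sqrt_of_sq_le (by linarith)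
  rw [mu]
  nlinarith [pi_gt_d2]

lemma sq_le_mu_pow_four (hx : 1 ≤ x) : 32 * x ^ 2 ≤ mu x ^ 4 := by
  have hsq : mu x ^ 2 = π ^ 2 * (24 * x - 1) / 36 := by
    rw [mu, div_pow, mul_pow, Real.sq_sqrt (by linarith)]
    norm_num
  have hle : 6 * x ≤ mu x ^ 2 := by
    have hπ : 9.8 ≤ π ^ 2 := by nlinarith [pi_gt_d2]
    rw [hsq]
    nlinarith
  nlinarith

lemma abs_log_sub_log_le {a b δ : ℝ} (hb : 0 < b) (hδ : δ ≤ 1 / 2) (h : |a - b| ≤ δ * b) :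
    |Real.log a - Real.log b| ≤ 2 * δ := by
  obtain ⟨hlower, hupper⟩ := abs_le.mp h
  have ha : 0 < a := by nlinarith
  have hδ0 : 0 ≤ δ := nonneg_of_mul_nonneg_left ((abs_nonneg _).trans h) hb
  rw [← Real.log_div ha.ne' hb.ne', abs_le]
  constructor
  · have hinv : (a / b)⁻¹ ≤ 1 + 2 * δ := by
      rw [inv_div, div_le_iff₀ ha]
      nlinarith
    linarith [Real.one_sub_inv_le_log_of_pos (div_pos ha hb)]
  · have hratio : a / b ≤ 1 + δ := by
      rw [div_le_iff₀ hb]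
      linarith
    linarith [Real.log_le_sub_one_of_pos (div_pos ha hb)]

lemma abs_log_p_sub_log_mainTerm_le (hn : 2094 ≤ n) :
    |Real.log (p n) - Real.log (mainTerm n)| ≤ 1 / (n : ℝ) ^ 2 := by
  have hx : (2094 : ℝ) ≤ n := by exact_mod_cast hn
  have hμ := le_mu hx
  have hδ : 16 / mu n ^ 4 ≤ 1 / 2 * (1 / (n : ℝ) ^ 2) := by
    rw [one_div_mul_one_div, div_le_div_iff₀ (by positivity) (by positivity)]
    linarith [sq_le_mu_pow_four (x := n) (by linarith)]
  have hn2 : 1 / (n : ℝ) ^ 2 ≤ 1 := by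
    rw [div_le_one (by positivity)]
    nlinarith
  have h := abs_log_sub_log_le (δ := 16 / mu n ^ 4) (mainTerm_pos (by linarith)) (by linarith)
    ((abs_p_sub_mainTerm_le hμ).trans_eq (mul_div_right_comm _ _ _))
  linarith

lemma log_mainTerm (hμ : 1 < mu x) :
    Real.log (mainTerm x) =
      mu x + Real.log (1 - 1 / mu x) - Real.log (24 * x - 1) + Real.log √12 := by
  have hx := mu_pos_iff.mp (one_pos.trans hμ)
  have hinv : 1 - 1 / mu x ≠ 0 := (sub_pos.mpr ((div_lt_one (by linarith)).mpr hμ)).ne'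
  rw [mainTerm, Real.log_mul (by positivity) hinv, Real.log_mul (by positivity)
    (Real.exp_pos _).ne', Real.log_div (by positivity) hx.ne', Real.log_exp]
  ring

end LogMainTerm

section SecondDifference

open Set

/-- The central second difference `f (x + 1) + f (x - 1) - 2 * f x`; at `x = n` it is `Δ² f (n - 1)`
in the notation of the paper. -/
noncomputable def secondDiff (f : ℝ → ℝ) (x : ℝ) : ℝ := f (x + 1) + f (x - 1) - 2 * f x

variable {x : ℝ} {s t : Set ℝ} {f g : ℝ → ℝ}

lemma secondDiff_nonneg (hf : ConvexOn ℝ s f) (hsub : x - 1 ∈ s) (hadd : x + 1 ∈ s) :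
    0 ≤ secondDiff f x := by
  have h := hf.2 hsub hadd (by norm_num : (0 : ℝ) ≤ 1 / 2) (by norm_num : (0 : ℝ) ≤ 1 / 2)
    (by norm_num)
  have hmid : (1 / 2 : ℝ) • (x - 1) + (1 / 2 : ℝ) • (x + 1) = x := by
    simp only [smul_eq_mul]
    ring
  rw [hmid, smul_eq_mul, smul_eq_mul] at h
  rw [secondDiff]
  linarith

lemma convexOn_comp_of_mapsTo (hg : ConvexOn ℝ t g) (hf : ConcaveOn ℝ s f)
    (hanti : AntitoneOn g t) (hst : MapsTo f s t) : ConvexOn ℝ s fun x ↦ g (f x) :=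
  ⟨hf.1, fun _ hx _ hy _ _ ha hb hab ↦
    (hanti (hg.1 (hst hx) (hst hy) ha hb hab) (hst (hf.1 hx hy ha hb hab))
      (hf.2 hx hy ha hb hab)).trans (hg.2 (hst hx) (hst hy) ha hb hab)⟩

lemma convexOn_one_div : ConvexOn ℝ (Ioi 0) fun t : ℝ ↦ 1 / t := by
  simpa only [zpow_neg_one, one_div] using convexOn_zpow (𝕜 := ℝ) (-1)

lemma antitoneOn_one_div : AntitoneOn (fun t : ℝ ↦ 1 / t) (Ioi 0) :=
  fun _ ha _ _ hab ↦ one_div_le_one_div_of_le ha hab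

lemma convexOn_one_div_of_concaveOn (hf : ConcaveOn ℝ s f) (hpos : ∀ x ∈ s, 0 < f x) :
    ConvexOn ℝ s fun x ↦ 1 / f x :=
  convexOn_comp_of_mapsTo convexOn_one_div hf antitoneOn_one_div hpos

lemma concaveOn_one_sub_one_div (hf : ConcaveOn ℝ s f) (hpos : ∀ x ∈ s, 0 < f x) :
    ConcaveOn ℝ s fun x ↦ 1 - 1 / f x :=
  (concaveOn_const 1 hf.1).sub (convexOn_one_div_of_concaveOn hf hpos)

lemma convexOn_mul_of_antitoneOn (hf : ConvexOn ℝ s f) (hg : ConvexOn ℝ s g)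
    (hf0 : ∀ x ∈ s, 0 ≤ f x) (hg0 : ∀ x ∈ s, 0 ≤ g x) (hf_anti : AntitoneOn f s)
    (hg_anti : AntitoneOn g s) : ConvexOn ℝ s fun x ↦ f x * g x :=
  hf.mul hg hf0 hg0 (hf_anti.monovaryOn hg_anti)

lemma convexOn_one_div_sqrt : ConvexOn ℝ (Ioi 0) fun t ↦ 1 / √t :=
  convexOn_one_div_of_concaveOn
    (strictConcaveOn_sqrt.concaveOn.subset Ioi_subset_Ici_self (convex_Ioi 0))
    fun _ ht ↦ Real.sqrt_pos.mpr ht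

lemma antitoneOn_one_div_sqrt : AntitoneOn (fun t ↦ 1 / √t) (Ioi 0) :=
  fun _ ha _ _ hab ↦ one_div_le_one_div_of_le (Real.sqrt_pos.mpr ha) (Real.sqrt_le_sqrt hab)

lemma one_div_mem_Icc {t : ℝ} (ht : 1 ≤ t) : 1 / t ∈ Icc (0 : ℝ) 1 :=
  ⟨by positivity, (div_le_one (by linarith)).mpr ht⟩

lemma convexOn_one_div_sqrt_mul :
    ConvexOn ℝ (Ici 1) fun t ↦ 1 / √t * (1 - √(1 - 1 / (24 * t))) := by
  have hIci : Ici (1 : ℝ) ⊆ Ioi 0 := Ici_subset_Ioi.mpr one_pos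
  have hmem {t : ℝ} (ht : t ∈ Ici 1) : 1 / (24 * t) ∈ Icc (0 : ℝ) 1 :=
    one_div_mem_Icc (by linarith [mem_Ici.mp ht])
  have hinner : ConcaveOn ℝ (Ici 1) fun t : ℝ ↦ 1 - 1 / (24 * t) :=
    concaveOn_one_sub_one_div ((LinearMap.mulLeft ℝ (24 : ℝ)).concaveOn (convex_Ici 1))
      fun t ht ↦ mul_pos (by norm_num) (hIci ht)
  have houter : ConvexOn ℝ (Ici 0) fun u ↦ 1 - √u :=
    (convexOn_const 1 (convex_Ici 0)).sub strictConcaveOn_sqrt.concaveOn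
  refine convexOn_mul_of_antitoneOn (convexOn_one_div_sqrt.subset hIci (convex_Ici 1))
    (convexOn_comp_of_mapsTo (g := fun u ↦ 1 - √u) houter hinner
      (fun _ _ _ _ hab ↦ sub_le_sub_left (Real.sqrt_le_sqrt hab) 1)
      fun t ht ↦ sub_nonneg.mpr (hmem ht).2)
    (fun t _ ↦ by positivity) (fun t ht ↦ ?_) (antitoneOn_one_div_sqrt.mono hIci)
    fun a ha b _ hab ↦ ?_
  · exact sub_nonneg.mpr (Real.sqrt_le_one.mpr (sub_le_self _ (hmem ht).1))
  · have ha0 : 0 < a := hIci ha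
    gcongr

lemma concaveOn_mu : ConcaveOn ℝ (Ici 1) mu := by
  refine ⟨convex_Ici 1, fun a ha b hb u v hu hv huv ↦ ?_⟩
  have hsqrt := strictConcaveOn_sqrt.concaveOn.2 (mem_Ici.mpr (by linarith [mem_Ici.mp ha]))
    (mem_Ici.mpr (by linarith [mem_Ici.mp hb]) : (24 * b - 1) ∈ Ici (0 : ℝ)) hu hv huv
    (x := 24 * a - 1)
  simp only [smul_eq_mul, mu] at hsqrt ⊢
  have harg : u * (24 * a - 1) + v * (24 * b - 1) = 24 * (u * a + v * b) - 1 := by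
    linear_combination -huv
  rw [harg] at hsqrt
  linarith [mul_le_mul_of_nonneg_left hsqrt pi_pos.le]

lemma mu_mono : Monotone mu := fun a b hab ↦ by
  unfold mu
  gcongr

lemma one_lt_mu (hx : 1 ≤ x) : 1 < mu x := by
  have hsqrt : 4 ≤ √(24 * x - 1) := Real.le_sqrt_of_sq_le (by linarith)
  rw [mu]
  nlinarith [pi_gt_three]

lemma convexOn_one_div_mul_neg_log :
    ConvexOn ℝ (Ici 1) fun t ↦ 1 / t * -Real.log (1 - 1 / mu t) := by
  have hIci : Ici (1 : ℝ) ⊆ Ioi 0 := Ici_subset_Ioi.mpr one_pos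
  have hpos {t : ℝ} (ht : t ∈ Ici 1) : 0 < 1 - 1 / mu t :=
    sub_pos.mpr ((div_lt_one (one_pos.trans (one_lt_mu ht))).mpr (one_lt_mu ht))
  have hmu {t : ℝ} (ht : t ∈ Ici 1) : 0 < mu t := one_pos.trans (one_lt_mu ht)
  have hlog : AntitoneOn (fun u ↦ -Real.log u) (Ioi 0) :=
    fun a ha b _ hab ↦ neg_le_neg (Real.log_le_log ha hab)
  refine convexOn_mul_of_antitoneOn (convexOn_one_div.subset hIci (convex_Ici 1))
    (convexOn_comp_of_mapsTo (g := fun u ↦ -Real.log u) strictConcaveOn_log_Ioi.concaveOn.neg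
      (concaveOn_one_sub_one_div concaveOn_mu fun t ht ↦ hmu ht) hlog fun t ht ↦ hpos ht)
    (fun t ht ↦ (one_div_pos.mpr (hIci ht)).le) (fun t ht ↦ ?_) (antitoneOn_one_div.mono hIci)
    fun a ha b hb hab ↦ hlog (hpos ha) (hpos hb) ?_
  · exact neg_nonneg.mpr (Real.log_nonpos (hpos ht).le
      (sub_le_self _ (one_div_pos.mpr (hmu ht)).le))
  · exact sub_le_sub_left (one_div_le_one_div_of_le (hmu ha) (mu_mono hab)) 1

lemma mu_div_eq (hx : 1 ≤ x) :
    mu x / x = π * √24 / 6 * (1 / √x - 1 / √x * (1 - √(1 - 1 / (24 * x)))) := by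
  have hx0 : 0 < x := by linarith
  have harg : 24 * x - 1 = 24 * (x * (1 - 1 / (24 * x))) := by field_simp
  rw [mu, harg, Real.sqrt_mul (by norm_num), Real.sqrt_mul hx0.le, ← mul_one_sub, sub_sub_cancel]
  generalize √(1 - 1 / (24 * x)) = b
  have hsq : √x ^ 2 = x := Real.sq_sqrt hx0.le
  field_simp
  rw [hsq, mul_comm]

lemma one_div_sqrt_le {z w : ℝ} (hz : 0 < z) (hw : 0 < w) (h : 1 ≤ w ^ 2 * z) : 1 / √z ≤ w := by
  rw [div_le_comm₀ (Real.sqrt_pos.mpr hz) hw]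
  refine Real.le_sqrt_of_sq_le ?_
  rwa [div_pow, one_pow, div_le_iff₀' (by positivity)]

lemma one_div_sqrt_one_add_le {u : ℝ} (hu : 0 ≤ u) (hu' : u ≤ 1) :
    1 / √(1 + u) ≤ 1 - u / 2 + 3 * u ^ 2 / 8 :=
  one_div_sqrt_le (by linarith) (by nlinarith) (by nlinarith [pow_nonneg hu 3, pow_nonneg hu 4])

lemma one_div_sqrt_one_sub_le {u : ℝ} (hu : 0 ≤ u) (hu' : u ≤ 1 / 4) :
    1 / √(1 - u) ≤ 1 + u / 2 + 3 * u ^ 2 / 8 + u ^ 3 / 2 := by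
  have hfactor : (1 + u / 2 + 3 * u ^ 2 / 8 + u ^ 3 / 2) ^ 2 * (1 - u) - 1 =
      u ^ 3 * (3 / 8 - 47 / 64 * u - 17 / 64 * u ^ 2 - u ^ 3 / 8 - u ^ 4 / 4) := by ring
  have hcofactor : 0 ≤ 3 / 8 - 47 / 64 * u - 17 / 64 * u ^ 2 - u ^ 3 / 8 - u ^ 4 / 4 := by
    have hpow (k : ℕ) : u ^ k ≤ (1 / 4) ^ k := pow_le_pow_left₀ hu hu' k
    linarith [hpow 2, hpow 3, hpow 4]
  refine one_div_sqrt_le (by linarith) (by positivity) ?_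
  linarith [mul_nonneg (pow_nonneg hu 3) hcofactor, hfactor]

lemma secondDiff_one_div_sqrt_le (hx : 4 ≤ x) :
    secondDiff (fun t ↦ 1 / √t) x ≤ 1 / √x * (3 / (4 * x ^ 2) + 1 / (2 * x ^ 3)) := by
  have hx0 : 0 < x := by linarith
  have hscale {u : ℝ} : 1 / √(x * u) = 1 / √x * (1 / √u) := by
    rw [Real.sqrt_mul hx0.le, one_div_mul_one_div]
  have hadd : x + 1 = x * (1 + 1 / x) := by field_simp
  have hsub : x - 1 = x * (1 - 1 / x) := by field_simp
  have hinv : 1 / x ≤ 1 / 4 := one_div_le_one_div_of_le (by norm_num) hx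
  have hinv0 : 0 ≤ 1 / x := by positivity
  rw [secondDiff, hadd, hsub, hscale, hscale]
  calc 1 / √x * (1 / √(1 + 1 / x)) + 1 / √x * (1 / √(1 - 1 / x)) - 2 * (1 / √x)
      = 1 / √x * (1 / √(1 + 1 / x) + 1 / √(1 - 1 / x) - 2) := by ring
    _ ≤ 1 / √x * (3 / 4 * (1 / x) ^ 2 + (1 / x) ^ 3 / 2) := by
        gcongr
        linarith [one_div_sqrt_one_add_le hinv0 (by linarith), one_div_sqrt_one_sub_le hinv0 hinv]
    _ = 1 / √x * (3 / (4 * x ^ 2) + 1 / (2 * x ^ 3)) := by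
        field_simp

lemma secondDiff_mu_div_le (hx : 4 ≤ x) :
    secondDiff (fun t ↦ mu t / t) x ≤ π * √24 / 8 / (x ^ 2 * √x) + 2 / x ^ 3 := by
  have : 0 < x := by linarith
  have hconvex := secondDiff_nonneg (x := x) convexOn_one_div_sqrt_mul
    (mem_Ici.mpr (by linarith)) (mem_Ici.mpr (by linarith))
  have hsplit : secondDiff (fun t ↦ mu t / t) x = π * √24 / 6 * (secondDiff (fun t ↦ 1 / √t) x -
      secondDiff (fun t ↦ 1 / √t * (1 - √(1 - 1 / (24 * t)))) x) := by
    simp only [secondDiff]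
    rw [mu_div_eq (x := x) (by linarith), mu_div_eq (x := x + 1) (by linarith),
      mu_div_eq (x := x - 1) (by linarith)]
    ring
  have hsqrt : 2 ≤ √x := Real.le_sqrt_of_sq_le (by linarith)
  have h24 : √24 ≤ 5 := by
    rw [Real.sqrt_le_left (by norm_num)]
    norm_num
  have hsmall : π * √24 / 12 / √x ≤ 2 := by
    rw [div_le_iff₀ (by positivity)]
    nlinarith [pi_lt_four, pi_pos]
  calc secondDiff (fun t ↦ mu t / t) x
      ≤ π * √24 / 6 * (1 / √x * (3 / (4 * x ^ 2) + 1 / (2 * x ^ 3))) := by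
        rw [hsplit]
        gcongr
        linarith [secondDiff_one_div_sqrt_le hx]
    _ = π * √24 / 8 / (x ^ 2 * √x) + π * √24 / 12 / √x / x ^ 3 := by
        field_simp
        ring
    _ ≤ π * √24 / 8 / (x ^ 2 * √x) + 2 / x ^ 3 := by gcongr

lemma secondDiff_one_div (hx : 1 < x) :
    secondDiff (fun t ↦ 1 / t) x = 2 / (x * (x ^ 2 - 1)) := by
  have hsub : x - 1 ≠ 0 := by linarith
  have hadd : x + 1 ≠ 0 := by linarith
  rw [secondDiff, show x ^ 2 - 1 = (x - 1) * (x + 1) by ring]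
  field_simp
  ring

lemma log_add_mul_le_log {a b : ℝ} (ha : 0 < 24 * a - 1) (hb : 0 < 24 * b - 1) :
    Real.log (24 * a - 1) + (b - a) * (24 / (24 * b - 1)) ≤ Real.log (24 * b - 1) := by
  have h := Real.one_sub_inv_le_log_of_pos (div_pos hb ha)
  have hdiff : 1 - (24 * a - 1) / (24 * b - 1) = (b - a) * (24 / (24 * b - 1)) := by
    field_simp
    ring
  rw [Real.log_div hb.ne' ha.ne', inv_div, hdiff] at h
  linarith

lemma div_sub_div_le_div_pow_three (hx : 100 ≤ x) :
    24 / (24 * (x - 1) - 1) / (x - 1) - 24 / (24 * (x + 1) - 1) / (x + 1) ≤ 4.2 / x ^ 3 := by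
  obtain ⟨m, hm, rfl⟩ : ∃ m, 0 ≤ m ∧ x = m + 100 := ⟨x - 100, by linarith, by ring⟩
  have hsub : 0 < m + 100 - 1 := by linarith
  have hsub24 : 0 < 24 * (m + 100 - 1) - 1 := by linarith
  have hadd24 : 0 < 24 * (m + 100 + 1) - 1 := by linarith
  rw [div_div, div_div, div_sub_div _ _ (by positivity) (by positivity),
    div_le_div_iff₀ (by positivity) (by positivity), ← sub_nonneg]
  ring_nf
  positivity

lemma le_secondDiff_log_div (hx : 100 ≤ x) :
    2 / (x * (x ^ 2 - 1)) * Real.log (24 * x - 1) - 4.2 / x ^ 3 ≤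
      secondDiff (fun t ↦ Real.log (24 * t - 1) / t) x := by
  have hadd := log_add_mul_le_log (a := x) (b := x + 1) (by linarith) (by linarith)
  have hsub := log_add_mul_le_log (a := x) (b := x - 1) (by linarith) (by linarith)
  have hadd' := div_le_div_of_nonneg_right hadd (by linarith : 0 ≤ x + 1)
  have hsub' := div_le_div_of_nonneg_right hsub (by linarith : 0 ≤ x - 1)
  rw [← secondDiff_one_div (by linarith)]
  simp only [secondDiff]
  linear_combination hadd' + hsub' + div_sub_div_le_div_pow_three hx

lemma le_mul_log_sub_log (hx : 2095 ≤ x) :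
    18 / x ^ 3 ≤ 2 / (x * (x ^ 2 - 1)) * (Real.log (24 * x - 1) - Real.log √12) := by
  have hx2 : 0 < x ^ 2 - 1 := by nlinarith
  have hlog : 15 * Real.log 2 ≤ Real.log (24 * x - 1) := by
    rw [← Nat.cast_ofNat (n := 15), ← Real.log_pow]
    exact Real.log_le_log (by positivity) (by norm_num; linarith)
  have hlog12 : Real.log √12 ≤ 2 * Real.log 2 := by
    rw [← Nat.cast_ofNat (n := 2) (R := ℝ), ← Real.log_pow]
    refine Real.log_le_log (by positivity) ?_
    rw [Real.sqrt_le_left (by positivity)]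
    norm_num
  have hcoeff : 2 / x ^ 3 ≤ 2 / (x * (x ^ 2 - 1)) :=
    div_le_div_of_nonneg_left (by norm_num) (by positivity) (by nlinarith)
  calc 18 / x ^ 3 = 2 / x ^ 3 * 9 := by ring
    _ ≤ 2 / (x * (x ^ 2 - 1)) * (Real.log (24 * x - 1) - Real.log √12) := by
        gcongr
        linarith [Real.log_two_gt_d9]

lemma secondDiff_log_mainTerm_div_le (hx : 2095 ≤ x) :
    secondDiff (fun t ↦ Real.log (mainTerm t) / t) x ≤
      π * √24 / 8 / (x ^ 2 * √x) - 11.8 / x ^ 3 := by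
  have hsplit : secondDiff (fun t ↦ Real.log (mainTerm t) / t) x =
      secondDiff (fun t ↦ mu t / t) x -
        secondDiff (fun t ↦ 1 / t * -Real.log (1 - 1 / mu t)) x -
        secondDiff (fun t ↦ Real.log (24 * t - 1) / t) x +
        Real.log √12 * secondDiff (fun t ↦ 1 / t) x := by
    have hmu {t : ℝ} (ht : 1 ≤ t) := log_mainTerm (one_lt_mu ht)
    simp only [secondDiff]
    rw [hmu (by linarith : 1 ≤ x), hmu (by linarith : 1 ≤ x + 1), hmu (by linarith : 1 ≤ x - 1)]
    ring
  have hconvex := secondDiff_nonneg (x := x) convexOn_one_div_mul_neg_log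
    (mem_Ici.mpr (by linarith)) (mem_Ici.mpr (by linarith))
  have hmain := secondDiff_mu_div_le (x := x) (by linarith)
  rw [hsplit, secondDiff_one_div (by linarith)]
  linear_combination hmain + hconvex + le_secondDiff_log_div (by linarith : 100 ≤ x) +
    le_mul_log_sub_log hx

lemma abs_div_sub_div_le {a b : ℝ} (hx : 0 < x) (h : |a - b| ≤ 1 / x ^ 2) :
    |a / x - b / x| ≤ 1 / x ^ 3 := by
  rw [← sub_div, abs_div, abs_of_pos hx, pow_succ, ← div_div]
  gcongr

lemma le_secondDiff_div_add {a₀ a₁ a₂ : ℝ} (hx : 100 ≤ x) (h₀ : |a₀ - f x| ≤ 1 / x ^ 2)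
    (h₁ : |a₁ - f (x + 1)| ≤ 1 / (x + 1) ^ 2) (h₂ : |a₂ - f (x - 1)| ≤ 1 / (x - 1) ^ 2) :
    a₁ / (x + 1) + a₂ / (x - 1) - 2 * a₀ / x ≤ secondDiff (fun t ↦ f t / t) x + 4.2 / x ^ 3 := by
  have hx0 : 0 < x := by linarith
  have hmid := (abs_le.mp (abs_div_sub_div_le hx0 h₀)).1
  have hadd := (abs_le.mp (abs_div_sub_div_le (by linarith) h₁)).2
  have hsub := (abs_le.mp (abs_div_sub_div_le (by linarith) h₂)).2
  have hadd_cube : 1 / (x + 1) ^ 3 ≤ 1 / x ^ 3 :=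
    one_div_le_one_div_of_le (by positivity) (pow_le_pow_left₀ hx0.le (by linarith) 3)
  have hsub_cube : 1 / (x - 1) ^ 3 ≤ 1.2 / x ^ 3 := by
    obtain ⟨m, hm, rfl⟩ : ∃ m, 0 ≤ m ∧ x = m + 100 := ⟨x - 100, by linarith, by ring⟩
    have hpos : 0 < m + 100 - 1 := by linarith
    rw [div_le_div_iff₀ (by positivity) (by positivity), ← sub_nonneg]
    ring_nf
    positivity
  rw [secondDiff]
  linear_combination 2 * hmid + hadd + hsub + hadd_cube + hsub_cube

lemma div_sub_div_add_le {c w : ℝ} (hc : 0 ≤ c) (hw : 0 < w) :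
    c / w - c / (w + c) ≤ c ^ 2 / w ^ 2 := by
  rw [div_sub_div _ _ hw.ne' (by positivity), div_le_div_iff₀ (by positivity) (by positivity)]
  linear_combination mul_nonneg (pow_nonneg hc 3) hw.le

lemma three_pi_div_eq (hx : 0 < x) :
    3 * π / (√24 * x ^ ((5 : ℝ) / 2) + 3 * π) =
      π * √24 / 8 / (x ^ 2 * √x + π * √24 / 8) := by
  have hrpow : x ^ ((5 : ℝ) / 2) = x ^ 2 * √x := by
    rw [Real.sqrt_eq_rpow, ← Real.rpow_natCast, ← Real.rpow_add hx]
    norm_num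
  rw [hrpow, div_eq_div_iff (by positivity) (by positivity)]
  linear_combination (-(x ^ 2 * √x * π / 8)) * Real.sq_sqrt (by norm_num : (0 : ℝ) ≤ 24)

lemma div_sub_lt_three_pi_div (hx : 1 ≤ x) :
    π * √24 / 8 / (x ^ 2 * √x) - 7 / x ^ 3 < 3 * π / (√24 * x ^ ((5 : ℝ) / 2) + 3 * π) := by
  have hx0 : 0 < x := by linarith
  have hc : (π * √24 / 8) ^ 2 ≤ 6 := by
    rw [div_pow, mul_pow, Real.sq_sqrt (by norm_num)]
    nlinarith [pi_lt_four, pi_pos]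
  have hw : (x ^ 2 * √x) ^ 2 = x ^ 5 := by
    rw [mul_pow, Real.sq_sqrt hx0.le]
    ring
  have hgap : (π * √24 / 8) ^ 2 / (x ^ 2 * √x) ^ 2 < 7 / x ^ 3 := by
    rw [hw]
    gcongr ?_ / ?_
    · linarith
    · exact pow_le_pow_right₀ hx (by norm_num)
  rw [three_pi_div_eq hx0]
  linarith [div_sub_div_add_le (by positivity : 0 ≤ π * √24 / 8) (by positivity : 0 < x ^ 2 * √x)]

end SecondDifference

end PartitionAsymptotics

theorem second_difference_log_nth_root_p_upper_bound (n : ℕ) (hn : 2095 ≤ n) :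
    Real.log (p (n + 1)) / ((n : ℝ) + 1) + Real.log (p (n - 1)) / ((n : ℝ) - 1) -
        2 * Real.log (p n) / (n : ℝ) <
      3 * π / (Real.sqrt 24 * (n : ℝ) ^ ((5 : ℝ) / 2) + 3 * π) := by
  have hx : (2095 : ℝ) ≤ n := by exact_mod_cast hn
  have hmid := PartitionAsymptotics.abs_log_p_sub_log_mainTerm_le (n := n) (by lia)
  have hadd := PartitionAsymptotics.abs_log_p_sub_log_mainTerm_le (n := n + 1) (by lia)
  have hsub := PartitionAsymptotics.abs_log_p_sub_log_mainTerm_le (n := n - 1) (by lia)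
  push_cast [Nat.cast_sub (by lia : 1 ≤ n)] at hadd hsub
  have hcube : 0 < 1 / (n : ℝ) ^ 3 := by positivity
  have herror := PartitionAsymptotics.le_secondDiff_div_add
    (f := fun t ↦ Real.log (PartitionAsymptotics.mainTerm t)) (by linarith) hmid hadd hsub
  linear_combination herror + PartitionAsymptotics.secondDiff_log_mainTerm_div_le hx +
    PartitionAsymptotics.div_sub_lt_three_pi_div (x := n) (by linarith) + 0.6 * hcube
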